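/- arXiv:2501.10599 — 2 statements merged into one kernel-verified Lean document; each statement's English description precedes it below -/
import Mathlib

section
/- Let p > 1 and a, b, L, μ, ν > 0, and let u be a nontrivial C¹ weak solution of −Δ^{a,b}_p u = μ (u⁺)^{p−1} − ν (u⁻)^{p−1} on (0,L) with u(0) = u(L) = 0. If (α, β) ⊆ (0,L) is a maximal interval of positivity of u (i.e. u > 0 on (α,β) and u(α) = u(β) = 0), then μ · (β − α)^p = λ^{a,b}_{1,p}(0,1); similarly, if (α, β) is a maximal interval of negativity of u, then ν · (β − α)^p = λ^{a,b}_{1,p}(0,1). In particular all positivity intervals of u have the same length (λ^{a,b}_{1,p}(0,1)/μ)^{1/p} and all negativity intervals have the same length (λ^{a,b}_{1,p}(0,1)/ν)^{1/p}. -/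
open Set

/-- `u` is C¹ on `[α, γ]` with derivative `u'` there. -/
def C1On (α γ : ℝ) (u u' : ℝ → ℝ) : Prop :=
  (∀ t ∈ Set.Icc α γ, HasDerivWithinAt u (u' t) (Set.Icc α γ) t) ∧
  ContinuousOn u' (Set.Icc α γ)

/-- Admissible functions on `[0, L]`: C¹ with zero boundary values. -/
def Adm (L : ℝ) (u u' : ℝ → ℝ) : Prop :=
  C1On 0 L u u' ∧ u 0 = 0 ∧ u L = 0

/-- The asymmetric energy integrand `a^p (s⁺)^p + b^p (s⁻)^p`. -/
noncomputable def asymE (p a b s : ℝ) : ℝ :=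
  a ^ p * (max s 0) ^ p + b ^ p * (max (-s) 0) ^ p

/-- The asymmetric flux `a^p (s⁺)^(p-1) - b^p (s⁻)^(p-1)`. -/
noncomputable def asymFlux (p a b s : ℝ) : ℝ :=
  a ^ p * (max s 0) ^ (p - 1) - b ^ p * (max (-s) 0) ^ (p - 1)

/-- The first Dirichlet eigenvalue `λ^{a,b}_{1,p}(0,L)`, as the infimum of the
asymmetric energy over normalized admissible functions. -/
noncomputable def lam1 (p a b L : ℝ) : ℝ :=
  sInf { E : ℝ | ∃ u u' : ℝ → ℝ, Adm L u u' ∧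
    (∫ t in (0:ℝ)..L, |u t| ^ p) = 1 ∧
    E = ∫ t in (0:ℝ)..L, asymE p a b (u' t) }

/-- `u` (a C¹ function on `[0,L]` with derivative `u'` and zero boundary values)
is a weak solution of `-Δ^{a,b}_p u = g` on `(0,L)`. -/
def IsWeakSol (p a b L : ℝ) (u u' g : ℝ → ℝ) : Prop :=
  Adm L u u' ∧
  ∀ φ φ' : ℝ → ℝ, Adm L φ φ' →
    (∫ t in (0:ℝ)..L, asymFlux p a b (u' t) * φ' t) =
      ∫ t in (0:ℝ)..L, g t * φ t

lemma maxpow_hasDerivAt {p : ℝ} (hp : 1 < p) (x : ℝ) :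
    HasDerivAt (fun x : ℝ => max x 0 ^ p) (p * max x 0 ^ (p - 1)) x := by
  rcases lt_trichotomy x 0 with hx | hx | hx
  · have h1 : (fun x : ℝ => max x 0 ^ p) =ᶠ[nhds x] fun _ => 0 := by
      filter_upwards [Iio_mem_nhds hx] with y hy
      rw [max_eq_right (le_of_lt hy), Real.zero_rpow (by linarith)]
    rw [max_eq_right hx.le, Real.zero_rpow (by linarith), mul_zero]
    exact (hasDerivAt_const x (0:ℝ)).congr_of_eventuallyEq h1
  · subst hx
    have h := hasDerivAt_abs_rpow (0:ℝ) hp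
    rw [max_self, Real.zero_rpow (by linarith), mul_zero]
    rw [mul_zero] at h
    rw [hasDerivAt_iff_isLittleO] at h ⊢
    refine Asymptotics.IsBigO.trans_isLittleO ?_ h
    refine Asymptotics.IsBigO.of_bound 1 (Filter.Eventually.of_forall fun y => ?_)
    simp only [max_self, abs_zero, Real.zero_rpow (by linarith : p ≠ 0), sub_zero, smul_zero,
      one_mul]
    rw [Real.norm_of_nonneg (by positivity), Real.norm_of_nonneg (by positivity)]
    exact Real.rpow_le_rpow (le_max_right _ _) (max_le (le_abs_self _) (abs_nonneg _))
      (by linarith)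
  · have h1 : (fun x : ℝ => max x 0 ^ p) =ᶠ[nhds x] fun y => y ^ p := by
      filter_upwards [Ioi_mem_nhds hx] with y hy
      rw [max_eq_left (le_of_lt hy)]
    rw [max_eq_left hx.le]
    exact (Real.hasDerivAt_rpow_const (Or.inl hx.ne')).congr_of_eventuallyEq h1

lemma maxpow_cont {q : ℝ} (hq : 0 ≤ q) : Continuous (fun x : ℝ => max x 0 ^ q) :=
  (continuous_id.max continuous_const).rpow_const (fun _ => Or.inr hq)

lemma asymFlux_cont {p a b : ℝ} (hp : 1 < p) : Continuous (asymFlux p a b) := by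
  have h := maxpow_cont (q := p - 1) (by linarith)
  have h2 : Continuous (fun x : ℝ => max (-x) 0 ^ (p - 1)) := h.comp continuous_neg
  unfold asymFlux
  exact (continuous_const.mul h).sub (continuous_const.mul h2)

lemma asymE_cont {p a b : ℝ} (hp : 1 < p) : Continuous (asymE p a b) := by
  have h := maxpow_cont (q := p) (by linarith)
  have h2 : Continuous (fun x : ℝ => max (-x) 0 ^ p) := h.comp continuous_neg
  unfold asymE
  exact (continuous_const.mul h).add (continuous_const.mul h2)

lemma asymE_nonneg {p a b : ℝ} (ha : 0 < a) (hb : 0 < b) (s : ℝ) : 0 ≤ asymE p a b s := by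
  unfold asymE; positivity

lemma asymFlux_neg (p a b s : ℝ) : asymFlux p b a (-s) = - asymFlux p a b s := by
  unfold asymFlux; rw [neg_neg]; ring

lemma asymE_neg (p a b s : ℝ) : asymE p b a (-s) = asymE p a b s := by
  unfold asymE; rw [neg_neg]; ring

lemma asymFlux_of_nonneg {p a b s : ℝ} (hp : 1 < p) (hs : 0 ≤ s) :
    asymFlux p a b s = a ^ p * s ^ (p - 1) := by
  unfold asymFlux
  rw [max_eq_left hs, max_eq_right (by linarith), Real.zero_rpow (by linarith)]; ring

lemma asymE_of_nonneg {p a b s : ℝ} (hp : 1 < p) (hs : 0 ≤ s) :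
    asymE p a b s = a ^ p * s ^ p := by
  unfold asymE
  rw [max_eq_left hs, max_eq_right (by linarith), Real.zero_rpow (by linarith)]; ring

lemma rpow_pm {p s : ℝ} (hp : 1 < p) (hs : 0 ≤ s) : s ^ (p - 1) * s = s ^ p := by
  rcases hs.eq_or_lt with h | h
  · subst h; rw [Real.zero_rpow (by linarith : p ≠ 0)]; ring
  · rw [Real.rpow_sub_one h.ne']; field_simp

lemma asymFlux_mul {p a b : ℝ} (hp : 1 < p) (s : ℝ) : asymFlux p a b s * s = asymE p a b s := by
  rcases le_total 0 s with hs | hs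
  · rw [asymFlux_of_nonneg hp hs, asymE_of_nonneg hp hs, mul_assoc, rpow_pm hp hs]
  · have hs' : 0 ≤ -s := by linarith
    rw [← asymE_neg p a b, ← neg_neg s, asymFlux_neg p b a, neg_neg,
      asymFlux_of_nonneg hp hs', asymE_of_nonneg hp hs', neg_mul_comm, mul_assoc, rpow_pm hp hs']

lemma asymE_smul {p a b r : ℝ} (hp : 1 < p) (hr : 0 ≤ r) (s : ℝ) :
    asymE p a b (r * s) = r ^ p * asymE p a b s := by
  have aux : ∀ a b s : ℝ, 0 ≤ s → asymE p a b (r * s) = r ^ p * asymE p a b s := by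
    intro a b s hs
    rw [asymE_of_nonneg hp hs, asymE_of_nonneg hp (mul_nonneg hr hs), Real.mul_rpow hr hs]; ring
  rcases le_total 0 s with hs | hs
  · exact aux a b s hs
  · have := aux b a (-s) (by linarith)
    rwa [mul_neg, asymE_neg, asymE_neg] at this

lemma asymFlux_smul {p a b r : ℝ} (hp : 1 < p) (hr : 0 ≤ r) (s : ℝ) :
    asymFlux p a b (r * s) = r ^ (p - 1) * asymFlux p a b s := by
  have aux : ∀ a b s : ℝ, 0 ≤ s → asymFlux p a b (r * s) = r ^ (p - 1) * asymFlux p a b s := by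
    intro a b s hs
    rw [asymFlux_of_nonneg hp hs, asymFlux_of_nonneg hp (mul_nonneg hr hs), Real.mul_rpow hr hs]
    ring
  rcases le_total 0 s with hs | hs
  · exact aux a b s hs
  · have := aux b a (-s) (by linarith)
    rw [mul_neg, asymFlux_neg, asymFlux_neg] at this
    linarith

lemma young_pt {p x y : ℝ} (hp : 1 < p) (hx : 0 ≤ x) (hy : 0 ≤ y) :
    p * x ^ (p - 1) * y ≤ (p - 1) * x ^ p + y ^ p := by
  have hpq := Real.HolderConjugate.conjExponent hp
  have h := Real.young_inequality_of_nonneg hy (Real.rpow_nonneg hx (p - 1)) hpq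
  have hp1 : p - 1 ≠ 0 := by linarith
  have e : (x ^ (p - 1)) ^ (Real.conjExponent p) = x ^ p := by
    rw [← Real.rpow_mul hx]; congr 1; unfold Real.conjExponent; field_simp
  rw [e] at h
  unfold Real.conjExponent at h
  have hp0 : 0 < p := by linarith
  have h2 := mul_le_mul_of_nonneg_left h hp0.le
  have e2 : p * (y ^ p / p + x ^ p / (p / (p - 1))) = (p - 1) * x ^ p + y ^ p := by
    field_simp; ring
  rw [e2] at h2
  linarith

lemma convex_pt {p a b : ℝ} (hp : 1 < p) (ha : 0 < a) (hb : 0 < b) (x y : ℝ) :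
    p * asymFlux p a b x * y - (p - 1) * asymE p a b x ≤ asymE p a b y := by
  have aux : ∀ a b x y : ℝ, 0 < a → 0 < b → 0 ≤ x →
      p * asymFlux p a b x * y - (p - 1) * asymE p a b x ≤ asymE p a b y := by
    intro a b x y ha hb hx
    rcases le_total 0 y with hy | hy
    · rw [asymFlux_of_nonneg hp hx, asymE_of_nonneg hp hx, asymE_of_nonneg hp hy]
      have h := mul_le_mul_of_nonneg_left (young_pt hp hx hy) (Real.rpow_nonneg ha.le p)
      linarith
    · have h0 := asymE_nonneg (p := p) ha hb y
      have h1 : 0 ≤ (p - 1) * asymE p a b x :=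
        mul_nonneg (by linarith) (asymE_nonneg ha hb x)
      have h2 : 0 ≤ p * asymFlux p a b x := by
        rw [asymFlux_of_nonneg hp hx]; positivity
      nlinarith [mul_nonpos_of_nonneg_of_nonpos h2 hy]
  rcases le_total 0 x with hx | hx
  · exact aux a b x y ha hb hx
  · have := aux b a (-x) (-y) hb ha (by linarith)
    rw [asymFlux_neg, asymE_neg, asymE_neg] at this
    linarith

/-- The Picone integrand. -/
noncomputable def piconeQ (p a b ε w w' v v' : ℝ) : ℝ :=
  p * asymFlux p a b w' * (max v 0 ^ (p - 1) * (w + ε) ^ (1 - p)) * v'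
    - (p - 1) * asymE p a b w' * (max v 0 ^ p * (w + ε) ^ (-p))

lemma piconeQ_le {p a b ε w w' v v' : ℝ} (hp : 1 < p) (ha : 0 < a) (hb : 0 < b)
    (hw : 0 < w + ε) : piconeQ p a b ε w w' v v' ≤ asymE p a b v' := by
  have hm : 0 ≤ max v 0 := le_max_right _ _
  have hr : 0 ≤ max v 0 / (w + ε) := by positivity
  have h := convex_pt hp ha hb (max v 0 / (w + ε) * w') v'
  rw [asymFlux_smul hp hr, asymE_smul hp hr, Real.div_rpow hm hw.le, Real.div_rpow hm hw.le] at h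
  refine le_trans (le_of_eq ?_) h
  unfold piconeQ
  rw [show 1 - p = -(p - 1) by ring, Real.rpow_neg hw.le, Real.rpow_neg hw.le]
  ring

lemma piconeQ_zero {p a b ε w w' v v' : ℝ} (hp : 1 < p) (hv : v ≤ 0) :
    piconeQ p a b ε w w' v v' = 0 := by
  unfold piconeQ
  rw [max_eq_right hv, Real.zero_rpow (by linarith), Real.zero_rpow (by linarith)]; ring

/-- Data of a positive solution on `[0,1]`. -/
structure Pos (p a b κ : ℝ) (w w' : ℝ → ℝ) : Prop where
  c1 : C1On 0 1 w w'
  z0 : w 0 = 0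
  z1 : w 1 = 0
  pos : ∀ t ∈ Ioo (0:ℝ) 1, 0 < w t
  flux : ∀ t ∈ Ioo (0:ℝ) 1, HasDerivAt (fun t => asymFlux p a b (w' t)) (-(κ * w t ^ (p - 1))) t

lemma C1On.cont {α γ : ℝ} {u u' : ℝ → ℝ} (h : C1On α γ u u') : ContinuousOn u (Icc α γ) :=
  fun t ht => (h.1 t ht).continuousWithinAt

lemma C1On.deriv {α γ : ℝ} {u u' : ℝ → ℝ} (h : C1On α γ u u') {t : ℝ} (ht : t ∈ Ioo α γ) :
    HasDerivAt u (u' t) t :=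
  (h.1 t (Ioo_subset_Icc_self ht)).hasDerivAt (Icc_mem_nhds ht.1 ht.2)

lemma Pos.nonneg {p a b κ : ℝ} {w w' : ℝ → ℝ} (h : Pos p a b κ w w') :
    ∀ t ∈ Icc (0:ℝ) 1, 0 ≤ w t := by
  intro t ht
  rcases ht.1.eq_or_lt with h0 | h0
  · rw [← h0, h.z0]
  rcases ht.2.eq_or_lt with h1 | h1
  · rw [h1, h.z1]
  exact (h.pos t ⟨h0, h1⟩).le

lemma II {f : ℝ → ℝ} (h : ContinuousOn f (Icc (0:ℝ) 1)) :
    IntervalIntegrable f MeasureTheory.volume 0 1 := by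
  apply ContinuousOn.intervalIntegrable
  rwa [uIcc_of_le zero_le_one]

lemma piconeQ_cont {p a b κ ε : ℝ} {w w' v v' : ℝ → ℝ} (hp : 1 < p) (hε : 0 < ε)
    (h : Pos p a b κ w w') (hv : C1On 0 1 v v') :
    ContinuousOn (fun t => piconeQ p a b ε (w t) (w' t) (v t) (v' t)) (Icc 0 1) := by
  have hF := (asymFlux_cont (p := p) (a := a) (b := b) hp).comp_continuousOn h.c1.2
  have hE := (asymE_cont (p := p) (a := a) (b := b) hp).comp_continuousOn h.c1.2
  have h1 := (maxpow_cont (q := p - 1) (by linarith)).comp_continuousOn hv.cont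
  have h2 := (maxpow_cont (q := p) (by linarith)).comp_continuousOn hv.cont
  have hw : ContinuousOn (fun t => w t + ε) (Icc 0 1) := h.c1.cont.add continuousOn_const
  have hne : ∀ t ∈ Icc (0:ℝ) 1, w t + ε ≠ 0 := fun t ht => by
    have := h.nonneg t ht; linarith
  have h3 : ContinuousOn (fun t => (w t + ε) ^ (1 - p)) (Icc 0 1) :=
    hw.rpow_const fun t ht => Or.inl (hne t ht)
  have h4 : ContinuousOn (fun t => (w t + ε) ^ (-p)) (Icc 0 1) :=
    hw.rpow_const fun t ht => Or.inl (hne t ht)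
  unfold piconeQ
  exact (((continuousOn_const.mul hF).mul (h1.mul h3)).mul hv.2).sub
    ((continuousOn_const.mul hE).mul (h2.mul h4))

/-- The weight in the Picone identity. -/
noncomputable def picW (p ε w v : ℝ) : ℝ := max v 0 ^ p * (w ^ (p - 1) * (w + ε) ^ (1 - p))

lemma picW_cont {p a b κ ε : ℝ} {w w' v v' : ℝ → ℝ} (hp : 1 < p) (hε : 0 < ε)
    (h : Pos p a b κ w w') (hv : C1On 0 1 v v') :
    ContinuousOn (fun t => picW p ε (w t) (v t)) (Icc 0 1) := by
  have h2 := (maxpow_cont (q := p) (by linarith)).comp_continuousOn hv.cont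
  have hw : ContinuousOn (fun t => w t + ε) (Icc 0 1) := h.c1.cont.add continuousOn_const
  have hne : ∀ t ∈ Icc (0:ℝ) 1, w t + ε ≠ 0 := fun t ht => by
    have := h.nonneg t ht; linarith
  have h3 : ContinuousOn (fun t => (w t + ε) ^ (1 - p)) (Icc 0 1) :=
    hw.rpow_const fun t ht => Or.inl (hne t ht)
  have h5 : ContinuousOn (fun t => (w t) ^ (p - 1)) (Icc 0 1) :=
    h.c1.cont.rpow_const fun t ht => Or.inr (by linarith)
  unfold picW
  exact h2.mul (h5.mul h3)

lemma picone_int {p a b κ ε : ℝ} {w w' v v' : ℝ → ℝ} (hp : 1 < p) (hε : 0 < ε)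
    (h : Pos p a b κ w w') (hv : Adm 1 v v') :
    (∫ t in (0:ℝ)..1, piconeQ p a b ε (w t) (w' t) (v t) (v' t)) =
      κ * ∫ t in (0:ℝ)..1, picW p ε (w t) (v t) := by
  obtain ⟨hv1, hv0, hvL⟩ := hv
  have hQ := piconeQ_cont hp hε h hv1
  have hW := picW_cont hp hε h hv1
  have hF := (asymFlux_cont (p := p) (a := a) (b := b) hp).comp_continuousOn h.c1.2
  have h2 := (maxpow_cont (q := p) (by linarith)).comp_continuousOn hv1.cont
  have hw : ContinuousOn (fun t => w t + ε) (Icc 0 1) := h.c1.cont.add continuousOn_const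
  have hpos : ∀ t ∈ Icc (0:ℝ) 1, 0 < w t + ε := fun t ht => by
    have := h.nonneg t ht; linarith
  have h3 : ContinuousOn (fun t => (w t + ε) ^ (1 - p)) (Icc 0 1) :=
    hw.rpow_const fun t ht => Or.inl (hpos t ht).ne'
  have key := intervalIntegral.integral_eq_sub_of_hasDerivAt_of_le (a := (0:ℝ)) (b := 1)
    (f := fun t => asymFlux p a b (w' t) * (max (v t) 0 ^ p * (w t + ε) ^ (1 - p)))
    (f' := fun t => piconeQ p a b ε (w t) (w' t) (v t) (v' t) - κ * picW p ε (w t) (v t))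
    zero_le_one (hF.mul (h2.mul h3)) ?_ (II (hQ.sub (continuousOn_const.mul hW)))
  · rw [intervalIntegral.integral_sub (g := fun t => κ * picW p ε (w t) (v t)) (II hQ)
      (II (continuousOn_const.mul hW)),
      intervalIntegral.integral_const_mul] at key
    simp only [hv0, hvL, max_self, Real.zero_rpow (by linarith : p ≠ 0)] at key
    linarith
  · intro t ht
    have hw0 := hpos t (Ioo_subset_Icc_self ht)
    have d1 := (maxpow_hasDerivAt hp (v t)).comp t (hv1.deriv ht)
    have d2 := ((h.c1.deriv ht).add_const ε).rpow_const (p := 1 - p) (Or.inl hw0.ne')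
    have d3 := (h.flux t ht).mul (d1.mul d2)
    refine d3.congr_deriv ?_
    simp only [Function.comp, Pi.mul_apply]
    unfold piconeQ picW
    rw [← asymFlux_mul hp, show 1 - p - 1 = -p by ring]
    ring

lemma picW_tendsto {p a b κ : ℝ} {w w' v v' : ℝ → ℝ} (hp : 1 < p)
    (h : Pos p a b κ w w') (hv : Adm 1 v v') :
    Filter.Tendsto (fun ε => ∫ t in (0:ℝ)..1, picW p ε (w t) (v t)) (nhdsWithin 0 (Ioi 0))
      (nhds (∫ t in (0:ℝ)..1, max (v t) 0 ^ p)) := by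
  have h2 := (maxpow_cont (q := p) (by linarith)).comp_continuousOn hv.1.cont
  apply intervalIntegral.tendsto_integral_filter_of_dominated_convergence
    (fun t => max (v t) 0 ^ p)
  · filter_upwards [self_mem_nhdsWithin] with ε hε
    exact (II (picW_cont hp hε h hv.1)).aestronglyMeasurable_restrict_uIoc
  · filter_upwards [self_mem_nhdsWithin] with ε hε
    refine Filter.Eventually.of_forall fun t ht => ?_
    rw [uIoc_of_le zero_le_one] at ht
    have hε' : 0 < ε := hε
    have hw := h.nonneg t ⟨ht.1.le, ht.2⟩
    have hm : 0 ≤ max (v t) 0 ^ p := Real.rpow_nonneg (le_max_right _ _) _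
    have hwe : 0 < w t + ε := by linarith
    unfold picW
    rw [Real.norm_of_nonneg (by positivity), show 1 - p = -(p - 1) by ring, Real.rpow_neg hwe.le,
      ← div_eq_mul_inv, ← Real.div_rpow hw hwe.le]
    refine mul_le_of_le_one_right hm (Real.rpow_le_one (by positivity) ?_ (by linarith))
    rw [div_le_one hwe]; linarith
  · exact II h2
  · refine Filter.Eventually.of_forall fun t ht => ?_
    rw [uIoc_of_le zero_le_one] at ht
    rcases ht.2.eq_or_lt with h1 | h1
    · subst h1
      unfold picW
      simp only [hv.2.2, max_self, Real.zero_rpow (by linarith : p ≠ 0), zero_mul]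
      exact tendsto_const_nhds
    · have hw := h.pos t ⟨ht.1, h1⟩
      have hc : ContinuousAt (fun ε => picW p ε (w t) (v t)) 0 := by
        unfold picW
        refine continuousAt_const.mul (continuousAt_const.mul ?_)
        exact (continuousAt_const.add continuousAt_id).rpow_const (Or.inl (by simpa using hw.ne'))
      have e : picW p 0 (w t) (v t) = max (v t) 0 ^ p := by
        unfold picW
        rw [add_zero, ← Real.rpow_add hw]; simp
      have := hc.tendsto
      rw [e] at this
      exact this.mono_left nhdsWithin_le_nhds

lemma Pos.reflect {p a b κ : ℝ} {w w' : ℝ → ℝ} (h : Pos p a b κ w w') :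
    Pos p b a κ (fun t => w (1 - t)) (fun t => - w' (1 - t)) := by
  have hm : MapsTo (fun t : ℝ => 1 - t) (Icc 0 1) (Icc 0 1) := fun t ht =>
    ⟨by linarith [ht.2], by linarith [ht.1]⟩
  have hd : ∀ t : ℝ, HasDerivAt (fun t : ℝ => 1 - t) (-1) t := fun t => by
    simpa using (hasDerivAt_id t).const_sub 1
  refine ⟨⟨fun t ht => ?_, ?_⟩, by simp [h.z1], by simp [h.z0], fun t ht => ?_, fun t ht => ?_⟩
  · have := (h.c1.1 (1 - t) (hm ht)).comp t (hd t).hasDerivWithinAt hm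
    simpa [Function.comp_def] using this
  · exact (h.c1.2.comp (by fun_prop) hm).neg
  · exact h.pos _ ⟨by linarith [ht.2], by linarith [ht.1]⟩
  · have h1 := h.flux (1 - t) ⟨by linarith [ht.2], by linarith [ht.1]⟩
    have h2 := (h1.comp t (hd t)).neg
    simp only [asymFlux_neg]
    refine (HasDerivAt.congr_deriv h2 ?_)
    ring

lemma Adm.neg {L : ℝ} {v v' : ℝ → ℝ} (h : Adm L v v') : Adm L (fun t => - v t) (fun t => - v' t) :=
  ⟨⟨fun t ht => (h.1.1 t ht).neg, h.1.2.neg⟩, by simp [h.2.1], by simp [h.2.2]⟩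

lemma abs_split {p : ℝ} (hp : 1 < p) (x : ℝ) : |x| ^ p = max x 0 ^ p + max (-x) 0 ^ p := by
  rcases le_total 0 x with hx | hx
  · rw [abs_of_nonneg hx, max_eq_left hx, max_eq_right (by linarith : -x ≤ 0),
      Real.zero_rpow (by linarith)]; ring
  · rw [abs_of_nonpos hx, max_eq_right hx, max_eq_left (by linarith : 0 ≤ -x),
      Real.zero_rpow (by linarith)]; ring

lemma core_lower {p a b κ : ℝ} {w w' v v' : ℝ → ℝ} (hp : 1 < p) (ha : 0 < a) (hb : 0 < b)
    (h : Pos p a b κ w w') (hv : Adm 1 v v') (hn : (∫ t in (0:ℝ)..1, |v t| ^ p) = 1) :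
    κ ≤ ∫ t in (0:ℝ)..1, asymE p a b (v' t) := by
  have hr := h.reflect
  have t1 := ((picW_tendsto hp h hv).add (picW_tendsto hp hr hv.neg)).const_mul κ
  have c1 := II ((maxpow_cont (q := p) (by linarith)).comp_continuousOn hv.1.cont)
  have c2 := II ((maxpow_cont (q := p) (by linarith)).comp_continuousOn hv.neg.1.cont)
  rw [← intervalIntegral.integral_add (f := fun t => max (v t) 0 ^ p)
    (g := fun t => max (- v t) 0 ^ p) c1 c2] at t1
  have e : (∫ t in (0:ℝ)..1, (max (v t) 0 ^ p + max (- v t) 0 ^ p)) = 1 := by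
    rw [← hn]; congr 1; ext t; rw [abs_split hp]
  have t2 := t1.congr' (f₂ := fun ε => κ * ((∫ t in (0:ℝ)..1, picW p ε (w t) (v t)) +
    ∫ t in (0:ℝ)..1, picW p ε (w (1 - t)) (- v t))) Filter.EventuallyEq.rfl
  change Filter.Tendsto _ _ (nhds (κ * ∫ t in (0:ℝ)..1, (max (v t) 0 ^ p + max (- v t) 0 ^ p))) at t2
  rw [e, mul_one] at t2
  refine le_of_tendsto t2 ?_
  filter_upwards [self_mem_nhdsWithin] with ε hε
  have hε' : 0 < ε := hε
  rw [mul_add, ← picone_int hp hε h hv, ← picone_int hp hε hr hv.neg]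
  have q1 := II (piconeQ_cont hp hε h hv.1)
  have q2 := II (piconeQ_cont hp hε hr hv.neg.1)
  rw [← intervalIntegral.integral_add q1 q2]
  refine intervalIntegral.integral_mono_on zero_le_one (q1.add q2)
    (II ((asymE_cont hp).comp_continuousOn hv.1.2)) fun t ht => ?_
  have hw1 := h.nonneg t ht
  have hw2 := hr.nonneg t ht
  rcases le_total 0 (v t) with hx | hx
  · rw [piconeQ_zero (v := - v t) hp (by linarith), add_zero]
    exact piconeQ_le hp ha hb (by linarith)
  · rw [piconeQ_zero (v := v t) hp hx, zero_add]
    refine (piconeQ_le hp hb ha (by linarith)).trans (asymE_neg _ _ _ _).le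

lemma core_upper {p a b κ : ℝ} {w w' : ℝ → ℝ} (hp : 1 < p)
    (h : Pos p a b κ w w') : ∃ v v' : ℝ → ℝ, Adm 1 v v' ∧
    (∫ t in (0:ℝ)..1, |v t| ^ p) = 1 ∧ κ = ∫ t in (0:ℝ)..1, asymE p a b (v' t) := by
  have hp0 : 0 < p := by linarith
  have hc : ContinuousOn (fun t => w t ^ p) (Icc 0 1) :=
    h.c1.cont.rpow_const fun t ht => Or.inr hp0.le
  have hcE := (asymE_cont (p := p) (a := a) (b := b) hp).comp_continuousOn h.c1.2
  have hF := (asymFlux_cont (p := p) (a := a) (b := b) hp).comp_continuousOn h.c1.2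
  have hN : 0 < ∫ t in (0:ℝ)..1, w t ^ p :=
    intervalIntegral.intervalIntegral_pos_of_pos_on (II hc)
      (fun t ht => Real.rpow_pos_of_pos (h.pos t ht) _) zero_lt_one
  set N := ∫ t in (0:ℝ)..1, w t ^ p with hNdef
  have hE : (∫ t in (0:ℝ)..1, asymE p a b (w' t)) = κ * N := by
    have key := intervalIntegral.integral_eq_sub_of_hasDerivAt_of_le (a := (0:ℝ)) (b := 1)
      (f := fun t => asymFlux p a b (w' t) * w t)
      (f' := fun t => asymE p a b (w' t) - κ * w t ^ p)
      zero_le_one (hF.mul h.c1.cont) ?_ (II (hcE.sub (continuousOn_const.mul hc)))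
    · rw [intervalIntegral.integral_sub (f := fun t => asymE p a b (w' t))
        (g := fun t => κ * w t ^ p) (II hcE) (II (continuousOn_const.mul hc)),
        intervalIntegral.integral_const_mul] at key
      simp only [h.z0, h.z1] at key
      linarith
    · intro t ht
      refine ((h.flux t ht).mul (h.c1.deriv ht)).congr_deriv ?_
      rw [← asymFlux_mul hp, ← rpow_pm hp (h.pos t ht).le]; ring
  set c := N ^ (-(1 / p)) with hcdef
  have hc0 : 0 ≤ c := by positivity
  have hcp : c ^ p = N⁻¹ := by
    rw [hcdef, ← Real.rpow_mul hN.le, show -(1 / p) * p = -1 by field_simp, Real.rpow_neg_one]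
  refine ⟨fun t => c * w t, fun t => c * w' t, ⟨⟨fun t ht => (h.c1.1 t ht).const_mul c,
    continuousOn_const.mul h.c1.2⟩, by simp [h.z0], by simp [h.z1]⟩, ?_, ?_⟩
  · have : (∫ t in (0:ℝ)..1, |c * w t| ^ p) = ∫ t in (0:ℝ)..1, c ^ p * w t ^ p := by
      refine intervalIntegral.integral_congr fun t ht => ?_
      rw [uIcc_of_le zero_le_one] at ht
      have := h.nonneg t ht
      rw [abs_of_nonneg (mul_nonneg hc0 this), Real.mul_rpow hc0 this]
    rw [this, intervalIntegral.integral_const_mul, hcp, ← hNdef, inv_mul_cancel₀ hN.ne']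
  · simp only [asymE_smul hp hc0]
    rw [intervalIntegral.integral_const_mul, hcp, hE]
    field_simp

lemma core {p a b κ : ℝ} {w w' : ℝ → ℝ} (hp : 1 < p) (ha : 0 < a) (hb : 0 < b)
    (h : Pos p a b κ w w') : κ = lam1 p a b 1 := by
  obtain ⟨v, v', hv, hn, he⟩ := core_upper hp h
  unfold lam1
  apply le_antisymm
  · refine le_csInf ⟨κ, v, v', hv, hn, he⟩ ?_
    rintro E ⟨z, z', hz, hzn, rfl⟩
    exact core_lower hp ha hb h hz hzn
  · refine csInf_le ⟨κ, ?_⟩ ⟨v, v', hv, hn, he⟩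
    rintro E ⟨z, z', hz, hzn, rfl⟩
    exact core_lower hp ha hb h hz hzn

/-- du Bois-Reymond. -/
lemma dubois {L : ℝ} (hL : 0 < L) {F g : ℝ → ℝ} (hF : ContinuousOn F (Icc 0 L))
    (hg : ContinuousOn g (Icc 0 L))
    (hw : ∀ φ φ' : ℝ → ℝ, Adm L φ φ' →
      (∫ t in (0:ℝ)..L, F t * φ' t) = ∫ t in (0:ℝ)..L, g t * φ t) :
    ∀ t ∈ Ioo 0 L, HasDerivAt F (-(g t)) t := by
  set ge : ℝ → ℝ := IccExtend hL.le ((Icc 0 L).domRestrict g) with hge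
  set Fe : ℝ → ℝ := IccExtend hL.le ((Icc 0 L).domRestrict F) with hFe
  have cg : Continuous ge := (continuousOn_iff_continuous_domRestrict.1 hg).Icc_extend'
  have cF : Continuous Fe := (continuousOn_iff_continuous_domRestrict.1 hF).Icc_extend'
  have eg : ∀ t ∈ Icc 0 L, ge t = g t := fun t ht => IccExtend_of_mem hL.le _ ht
  have eF : ∀ t ∈ Icc 0 L, Fe t = F t := fun t ht => IccExtend_of_mem hL.le _ ht
  set G : ℝ → ℝ := fun t => ∫ s in (0:ℝ)..t, ge s with hG
  have dG : ∀ t, HasDerivAt G (ge t) t := fun t =>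
    intervalIntegral.integral_hasDerivAt_right (cg.intervalIntegrable _ _)
      (cg.stronglyMeasurableAtFilter _ _) cg.continuousAt
  have cG : Continuous G := continuous_iff_continuousAt.2 fun t => (dG t).continuousAt
  set c : ℝ := (∫ s in (0:ℝ)..L, (Fe s + G s)) / L with hc
  set K : ℝ → ℝ := fun t => Fe t + G t - c with hK
  have cK : Continuous K := (cF.add cG).sub continuous_const
  set φ : ℝ → ℝ := fun t => ∫ s in (0:ℝ)..t, K s with hφ
  have dφ : ∀ t, HasDerivAt φ (K t) t := fun t =>
    intervalIntegral.integral_hasDerivAt_right (cK.intervalIntegrable _ _)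
      (cK.stronglyMeasurableAtFilter _ _) cK.continuousAt
  have cφ : Continuous φ := continuous_iff_continuousAt.2 fun t => (dφ t).continuousAt
  have φ0 : φ 0 = 0 := by simp [hφ]
  have φL : φ L = 0 := by
    simp only [hφ, hK]
    rw [intervalIntegral.integral_sub (f := fun t => Fe t + G t) ((cF.add cG).intervalIntegrable _ _)
      (continuous_const.intervalIntegrable _ _), intervalIntegral.integral_const, hc]
    simp only [sub_zero, smul_eq_mul]
    field_simp
    ring
  have h1 := hw φ K ⟨⟨fun t _ => (dφ t).hasDerivWithinAt, cK.continuousOn⟩, φ0, φL⟩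
  have h2 : (∫ t in (0:ℝ)..L, Fe t * K t) = ∫ t in (0:ℝ)..L, ge t * φ t := by
    refine Eq.trans ?_ (h1.trans ?_) <;>
    · refine intervalIntegral.integral_congr fun t ht => ?_
      rw [uIcc_of_le hL.le] at ht
      simp only [eF t ht, eg t ht]
  have h3 : (∫ t in (0:ℝ)..L, (ge t * φ t + G t * K t)) = 0 := by
    rw [intervalIntegral.integral_eq_sub_of_hasDerivAt (f := fun t => G t * φ t)
      (fun t _ => (dG t).mul (dφ t)) (((cg.mul cφ).add (cG.mul cK)).intervalIntegrable _ _)]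
    rw [φ0, φL]; ring
  rw [intervalIntegral.integral_add (f := fun t => ge t * φ t) (g := fun t => G t * K t)
    ((cg.mul cφ).intervalIntegrable _ _)
    ((cG.mul cK).intervalIntegrable _ _), ← h2] at h3
  have h4 : (∫ t in (0:ℝ)..L, K t ^ 2) = 0 := by
    have e : ∀ t, K t ^ 2 = (Fe t * K t + G t * K t) - c * K t := fun t => by
      simp only [hK]; ring
    simp only [e]
    rw [intervalIntegral.integral_sub (f := fun t => Fe t * K t + G t * K t)
      (g := fun t => c * K t) (((cF.mul cK).add (cG.mul cK)).intervalIntegrable _ _)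
      ((continuous_const.mul cK).intervalIntegrable _ _),
      intervalIntegral.integral_add (f := fun t => Fe t * K t) (g := fun t => G t * K t)
      ((cF.mul cK).intervalIntegrable _ _)
      ((cG.mul cK).intervalIntegrable _ _), h3, intervalIntegral.integral_const_mul]
    change 0 - c * φ L = 0
    rw [φL]; ring
  have h5 : ∀ t ∈ Icc 0 L, K t = 0 := by
    intro t ht
    by_contra hne
    have : 0 < ∫ t in (0:ℝ)..L, K t ^ 2 :=
      intervalIntegral.integral_pos hL (cK.pow 2).continuousOn (fun _ _ => sq_nonneg _)
        ⟨t, ht, by positivity⟩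
    linarith
  intro t ht
  have hE : F =ᶠ[nhds t] fun s => c - G s := by
    filter_upwards [Ioo_mem_nhds ht.1 ht.2] with s hs
    have h6 := h5 s (Ioo_subset_Icc_self hs)
    simp only [hK] at h6
    rw [eF s (Ioo_subset_Icc_self hs)] at h6
    linarith
  rw [← eg t (Ioo_subset_Icc_self ht)]
  exact ((dG t).const_sub c).congr_of_eventuallyEq hE

theorem stmt14 (p a b L μ ν : ℝ) (hp : 1 < p) (ha : 0 < a) (hb : 0 < b) (hL : 0 < L)
    (hμ : 0 < μ) (hν : 0 < ν) (u u' : ℝ → ℝ)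
    (hsol : IsWeakSol p a b L u u'
      (fun t => μ * (max (u t) 0) ^ (p - 1) - ν * (max (-u t) 0) ^ (p - 1)))
    (hne : ∃ t ∈ Set.Icc (0:ℝ) L, u t ≠ 0) :
    (∀ α β : ℝ, 0 ≤ α → β ≤ L → α < β → u α = 0 → u β = 0 →
      (∀ t ∈ Set.Ioo α β, 0 < u t) → μ * (β - α) ^ p = lam1 p a b 1) ∧
    (∀ α β : ℝ, 0 ≤ α → β ≤ L → α < β → u α = 0 → u β = 0 →
      (∀ t ∈ Set.Ioo α β, u t < 0) → ν * (β - α) ^ p = lam1 p a b 1) := by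
  obtain ⟨⟨hC, h0, h1⟩, hw⟩ := hsol
  have cF := (asymFlux_cont (p := p) (a := a) (b := b) hp).comp_continuousOn hC.2
  have cg : ContinuousOn
      (fun t => μ * (max (u t) 0) ^ (p - 1) - ν * (max (-u t) 0) ^ (p - 1)) (Icc 0 L) :=
    (continuousOn_const.mul ((maxpow_cont (q := p - 1) (by linarith)).comp_continuousOn
      hC.cont)).sub (continuousOn_const.mul
      ((maxpow_cont (q := p - 1) (by linarith)).comp_continuousOn hC.cont.neg))
  have hd := dubois hL cF cg hw
  constructor
  · intro α β hα hβ hαβ uα uβ hpos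
    have hl : 0 < β - α := by linarith
    set l := β - α with hldef
    have hm : MapsTo (fun t : ℝ => α + l * t) (Icc 0 1) (Icc 0 L) := fun t ht =>
      ⟨by have := mul_nonneg hl.le ht.1; simp only; linarith,
       by have := mul_le_mul_of_nonneg_left ht.2 hl.le; simp only; linarith⟩
    have hm2 : MapsTo (fun t : ℝ => α + l * t) (Ioo 0 1) (Ioo α β) := fun t ht =>
      ⟨by have := mul_pos hl ht.1; simp only; linarith,
       by have := mul_lt_mul_of_pos_left ht.2 hl; simp only; linarith⟩
    have hdd : ∀ t : ℝ, HasDerivAt (fun t : ℝ => α + l * t) l t := fun t => by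
      simpa using ((hasDerivAt_id t).const_mul l).const_add α
    refine core (w := fun t => u (α + l * t)) (w' := fun t => l * u' (α + l * t)) hp ha hb
      ⟨⟨fun t ht => ?_, ?_⟩, by simp [uα], ?_, fun t ht => hpos _ (hm2 ht), fun t ht => ?_⟩
    · have := (hC.1 _ (hm ht)).comp t (hdd t).hasDerivWithinAt hm
      rw [mul_comm] at this
      exact this
    · exact continuousOn_const.mul (hC.2.comp (by fun_prop) hm)
    · rw [mul_one, show α + l = β by rw [hldef]; ring, uβ]
    · have hI := hm2 ht
      have hx := hd (α + l * t) ⟨lt_of_le_of_lt hα hI.1, lt_of_lt_of_le hI.2 hβ⟩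
      have hy := (hx.comp t (hdd t)).const_mul (l ^ (p - 1))
      simp only [asymFlux_smul hp hl.le]
      refine HasDerivAt.congr_deriv hy ?_
      have hu := hpos _ hI
      rw [max_eq_left hu.le, max_eq_right (by linarith), Real.zero_rpow (by linarith),
        ← rpow_pm hp hl.le]
      ring
  · intro α β hα hβ hαβ uα uβ hpos
    have hl : 0 < β - α := by linarith
    set l := β - α with hldef
    have hm : MapsTo (fun t : ℝ => β - l * t) (Icc 0 1) (Icc 0 L) := fun t ht =>
      ⟨by have := mul_le_mul_of_nonneg_left ht.2 hl.le; simp only; linarith,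
       by have := mul_nonneg hl.le ht.1; simp only; linarith⟩
    have hm2 : MapsTo (fun t : ℝ => β - l * t) (Ioo 0 1) (Ioo α β) := fun t ht =>
      ⟨by have := mul_lt_mul_of_pos_left ht.2 hl; simp only; linarith,
       by have := mul_pos hl ht.1; simp only; linarith⟩
    have hdd : ∀ t : ℝ, HasDerivAt (fun t : ℝ => β - l * t) (-l) t := fun t => by
      simpa using ((hasDerivAt_id t).const_mul l).const_sub β
    refine core (w := fun t => - u (β - l * t)) (w' := fun t => l * u' (β - l * t)) hp ha hb
      ⟨⟨fun t ht => ?_, ?_⟩, by simp [uβ], ?_, fun t ht => neg_pos.2 (hpos _ (hm2 ht)),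
        fun t ht => ?_⟩
    · have := ((hC.1 _ (hm ht)).comp t (hdd t).hasDerivWithinAt hm).neg
      refine HasDerivWithinAt.congr_deriv this ?_
      ring
    · exact continuousOn_const.mul (hC.2.comp (by fun_prop) hm)
    · rw [mul_one, show β - l = α by rw [hldef]; ring, uα, neg_zero]
    · have hI := hm2 ht
      have hx := hd (β - l * t) ⟨lt_of_le_of_lt hα hI.1, lt_of_lt_of_le hI.2 hβ⟩
      have hy := (hx.comp t (hdd t)).const_mul (l ^ (p - 1))
      simp only [asymFlux_smul hp hl.le]
      refine HasDerivAt.congr_deriv hy ?_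
      have hu := hpos _ hI
      rw [max_eq_right hu.le, max_eq_left (by linarith), Real.zero_rpow (by linarith),
        ← rpow_pm hp hl.le]
      ring
end

section
/- Let p > 1 and a, b, L > 0, and let μ, ν > 0. Then (μ, ν) belongs to the Fučík spectrum Σ^{a,b}_p(0,L) if and only if there exist nonnegative integers P and N with P + N ≥ 1 and |P − N| ≤ 1 such that P · μ^{−1/p} + N · ν^{−1/p} = ( λ^{a,b}_{1,p}(0,L) )^{−1/p}. -/
open Set

/-! ### Basic functions -/

/-- dual energy density -/
noncomputable def Ff (q a b v : ℝ) : ℝ := (max v 0 / a) ^ q + (max (-v) 0 / b) ^ q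

/-- inverse of the flux -/
noncomputable def ff (q a b v : ℝ) : ℝ :=
  a⁻¹ * (max v 0 / a) ^ (q - 1) - b⁻¹ * (max (-v) 0 / b) ^ (q - 1)

/-- the right-hand side -/
noncomputable def gg (p μ ν u : ℝ) : ℝ := μ * (max u 0) ^ (p - 1) - ν * (max (-u) 0) ^ (p - 1)

lemma ff_swap (q a b v : ℝ) : ff q b a (-v) = - ff q a b v := by
  unfold ff; rw [neg_neg]; ring

lemma Ff_swap (q a b v : ℝ) : Ff q b a (-v) = Ff q a b v := by
  unfold Ff; rw [neg_neg]; ring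

lemma gg_swap (p μ ν u : ℝ) : gg p ν μ (-u) = - gg p μ ν u := by
  unfold gg; rw [neg_neg]; ring

lemma Ff_nonneg {q a b : ℝ} (ha : 0 < a) (hb : 0 < b) (v : ℝ) : 0 ≤ Ff q a b v := by
  unfold Ff; positivity

lemma hasDerivAt_posPow {q : ℝ} (hq : 1 < q) (x : ℝ) :
    HasDerivAt (fun x : ℝ => (max x 0) ^ q) (q * (max x 0) ^ (q - 1)) x := by
  rcases lt_trichotomy x 0 with h | h | h
  · rw [max_eq_right h.le, Real.zero_rpow (by linarith), mul_zero]
    refine (hasDerivAt_const x (0:ℝ)).congr_of_eventuallyEq ?_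
    filter_upwards [Iio_mem_nhds h] with y hy
    rw [max_eq_right (le_of_lt hy), Real.zero_rpow (by linarith)]
  · subst h
    rw [max_self, Real.zero_rpow (by linarith), mul_zero]
    rw [← hasDerivWithinAt_univ, ← Set.Iic_union_Ici (a := (0:ℝ))]
    refine HasDerivWithinAt.union ?_ ?_
    · refine (hasDerivWithinAt_const (0:ℝ) _ (0:ℝ)).congr ?_ ?_
      · intro y hy; rw [max_eq_right hy, Real.zero_rpow (by linarith)]
      · rw [max_self, Real.zero_rpow (by linarith)]
    · have := (Real.hasDerivAt_rpow_const (x := 0) (p := q) (Or.inr hq.le))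
      rw [Real.zero_rpow (by linarith), mul_zero] at this
      refine this.hasDerivWithinAt.congr ?_ ?_
      · intro y hy; simp only [max_eq_left (show (0:ℝ) ≤ y from hy)]
      · simp
  · rw [max_eq_left h.le]
    refine (Real.hasDerivAt_rpow_const (Or.inl h.ne')).congr_of_eventuallyEq ?_
    filter_upwards [Ioi_mem_nhds h] with y hy
    rw [max_eq_left (le_of_lt hy)]

lemma hasDerivAt_negPow {q : ℝ} (hq : 1 < q) (x : ℝ) :
    HasDerivAt (fun x : ℝ => (max (-x) 0) ^ q) (-(q * (max (-x) 0) ^ (q - 1))) x := by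
  have := (hasDerivAt_posPow hq (-x)).comp x (hasDerivAt_neg x)
  refine this.congr_deriv ?_
  ring

lemma Ff_eq {q a b : ℝ} (ha : 0 < a) (hb : 0 < b) (v : ℝ) :
    Ff q a b v = (max v 0) ^ q / a ^ q + (max (-v) 0) ^ q / b ^ q := by
  unfold Ff
  rw [Real.div_rpow (le_max_right _ _) ha.le, Real.div_rpow (le_max_right _ _) hb.le]

lemma ff_eq {q a b : ℝ} (ha : 0 < a) (hb : 0 < b) (v : ℝ) :
    ff q a b v = (max v 0) ^ (q - 1) / a ^ q - (max (-v) 0) ^ (q - 1) / b ^ q := by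
  unfold ff
  rw [Real.div_rpow (le_max_right _ _) ha.le, Real.div_rpow (le_max_right _ _) hb.le,
    Real.rpow_sub_one ha.ne', Real.rpow_sub_one hb.ne']
  field_simp

lemma hasDerivAt_Ff {q a b : ℝ} (hq : 1 < q) (ha : 0 < a) (hb : 0 < b) (v : ℝ) :
    HasDerivAt (Ff q a b) (q * ff q a b v) v := by
  have h1 := ((hasDerivAt_posPow hq v).div_const (a ^ q)).add
    ((hasDerivAt_negPow hq v).div_const (b ^ q))
  have : Ff q a b = fun v => (max v 0) ^ q / a ^ q + (max (-v) 0) ^ q / b ^ q := by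
    funext v; exact Ff_eq ha hb v
  rw [this]
  refine h1.congr_deriv ?_
  rw [ff_eq ha hb]; ring

lemma continuous_Ff {q a b : ℝ} (hq : 1 < q) (ha : 0 < a) (hb : 0 < b) :
    Continuous (Ff q a b) :=
  continuous_iff_continuousAt.2 fun v => (hasDerivAt_Ff hq ha hb v).continuousAt

lemma continuous_posPow {r : ℝ} (hr : 0 ≤ r) : Continuous (fun x : ℝ => (max x 0) ^ r) :=
  (continuous_id.max continuous_const).rpow_const fun _ => Or.inr hr

lemma continuous_negPow {r : ℝ} (hr : 0 ≤ r) : Continuous (fun x : ℝ => (max (-x) 0) ^ r) :=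
  (continuous_neg.max continuous_const).rpow_const fun _ => Or.inr hr

lemma continuous_ff {q a b : ℝ} (hq : 1 < q) (ha : 0 < a) (hb : 0 < b) :
    Continuous (ff q a b) := by
  have : ff q a b = fun v => (max v 0) ^ (q - 1) / a ^ q - (max (-v) 0) ^ (q - 1) / b ^ q := by
    funext v; exact ff_eq ha hb v
  rw [this]
  exact ((continuous_posPow (by linarith)).div_const _).sub
    ((continuous_negPow (by linarith)).div_const _)

lemma continuous_gg {p : ℝ} (hp : 1 < p) (μ ν : ℝ) : Continuous (gg p μ ν) := by
  unfold gg
  exact (continuous_const.mul (continuous_posPow (by linarith))).sub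
    (continuous_const.mul (continuous_negPow (by linarith)))

lemma continuous_asymFlux {p : ℝ} (hp : 1 < p) (a b : ℝ) : Continuous (asymFlux p a b) := by
  unfold asymFlux
  exact (continuous_const.mul (continuous_posPow (by linarith))).sub
    (continuous_const.mul (continuous_negPow (by linarith)))

lemma continuous_asymE {p : ℝ} (hp : 1 < p) (a b : ℝ) : Continuous (asymE p a b) := by
  unfold asymE
  exact (continuous_const.mul (continuous_posPow (by linarith))).add
    (continuous_const.mul (continuous_negPow (by linarith)))

lemma mul_posPow {q : ℝ} (hq : 1 < q) (v : ℝ) : v * (max v 0) ^ (q - 1) = (max v 0) ^ q := by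
  rcases le_or_gt v 0 with h | h
  · rw [max_eq_right h, Real.zero_rpow (by linarith), Real.zero_rpow (by linarith), mul_zero]
  · rw [max_eq_left h.le, Real.rpow_sub_one h.ne']; field_simp

lemma mul_negPow {q : ℝ} (hq : 1 < q) (v : ℝ) :
    v * (max (-v) 0) ^ (q - 1) = -(max (-v) 0) ^ q := by
  have := mul_posPow hq (-v); linarith

lemma mul_ff {q a b : ℝ} (hq : 1 < q) (ha : 0 < a) (hb : 0 < b) (v : ℝ) :
    v * ff q a b v = Ff q a b v := by
  rw [ff_eq ha hb, Ff_eq ha hb, ← mul_posPow hq v]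
  have := mul_negPow hq v
  rw [show (max (-v) 0) ^ q = -(v * (max (-v) 0) ^ (q - 1)) by linarith]; ring

lemma mul_asymFlux {p : ℝ} (hp : 1 < p) (a b s : ℝ) :
    asymFlux p a b s * s = asymE p a b s := by
  unfold asymFlux asymE
  rw [← mul_posPow hp s]
  have := mul_negPow hp s
  rw [show (max (-s) 0) ^ p = -(s * (max (-s) 0) ^ (p - 1)) by linarith]; ring

lemma max_mul_nn {c : ℝ} (hc : 0 ≤ c) (v : ℝ) : max (c * v) 0 = c * max v 0 := by
  rw [mul_max_of_nonneg _ _ hc, mul_zero]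

lemma max_neg_mul_nn {c : ℝ} (hc : 0 ≤ c) (v : ℝ) : max (-(c * v)) 0 = c * max (-v) 0 := by
  rw [← max_mul_nn hc]; simp

lemma hconj_mul {p q : ℝ} (h : p.HolderConjugate q) : (p - 1) * (q - 1) = 1 := by
  have := h.mul_eq_add; linarith

lemma hconj_mul' {p q : ℝ} (h : p.HolderConjugate q) : (p - 1) * q = p := by
  have := h.mul_eq_add; linarith

lemma ff_homog {p q a b : ℝ} (h : p.HolderConjugate q) (ha : 0 < a) (hb : 0 < b)
    {c : ℝ} (hc : 0 ≤ c) (v : ℝ) : ff q a b (c ^ (p - 1) * v) = c * ff q a b v := by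
  have h0 : 0 ≤ c ^ (p - 1) := by positivity
  rw [ff_eq ha hb, ff_eq ha hb, max_mul_nn h0, max_neg_mul_nn h0,
    Real.mul_rpow h0 (le_max_right _ _), Real.mul_rpow h0 (le_max_right _ _),
    ← Real.rpow_mul hc, hconj_mul h, Real.rpow_one]
  ring

lemma Ff_homog {p q a b : ℝ} (h : p.HolderConjugate q) (ha : 0 < a) (hb : 0 < b)
    {c : ℝ} (hc : 0 ≤ c) (v : ℝ) : Ff q a b (c ^ (p - 1) * v) = c ^ p * Ff q a b v := by
  have h0 : 0 ≤ c ^ (p - 1) := by positivity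
  rw [Ff_eq ha hb, Ff_eq ha hb, max_mul_nn h0, max_neg_mul_nn h0,
    Real.mul_rpow h0 (le_max_right _ _), Real.mul_rpow h0 (le_max_right _ _),
    ← Real.rpow_mul hc, hconj_mul' h]
  ring

lemma ff_pos_of_pos {q a b : ℝ} (hq : 1 < q) (ha : 0 < a) {v : ℝ} (hv : 0 < v) :
    0 < ff q a b v := by
  unfold ff
  rw [max_eq_left hv.le, max_eq_right (by linarith : -v ≤ 0), zero_div,
    Real.zero_rpow (by linarith), mul_zero, sub_zero]
  positivity

lemma ff_neg_of_neg {q a b : ℝ} (hq : 1 < q) (hb : 0 < b) {v : ℝ} (hv : v < 0) :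
    ff q a b v < 0 := by
  have := ff_pos_of_pos (a := b) (b := a) hq hb (v := -v) (by linarith)
  rw [ff_swap] at this; linarith

lemma ff_asymFlux {p q a b : ℝ} (h : p.HolderConjugate q) (ha : 0 < a) (hb : 0 < b) (s : ℝ) :
    ff q a b (asymFlux p a b s) = s := by
  have key : ∀ a b s : ℝ, 0 < a → 0 < b → 0 ≤ s → ff q a b (asymFlux p a b s) = s := by
    intro a b s ha hb hs
    have hp := h.lt
    have hm : asymFlux p a b s = s ^ (p - 1) * a ^ p := by
      unfold asymFlux
      rw [max_eq_left hs, max_eq_right (by linarith : -s ≤ 0), Real.zero_rpow (by linarith)]; ring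
    rw [hm, ff_homog h ha hb hs]
    have h1 : ff q a b (a ^ p) = 1 := by
      have : 0 < a ^ p := by positivity
      rw [ff_eq ha hb, max_eq_left this.le, max_eq_right (by linarith), Real.zero_rpow
        (by have := h.symm.lt; linarith), zero_div, sub_zero, ← Real.rpow_mul ha.le]
      rw [show p * (q - 1) = q by have := h.mul_eq_add; linarith]
      field_simp
    rw [h1, mul_one]
  rcases le_total 0 s with hs | hs
  · exact key a b s ha hb hs
  · have := key b a (-s) hb ha (by linarith)
    have e : asymFlux p b a (-s) = - asymFlux p a b s := by
      unfold asymFlux; rw [neg_neg]; ring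
    rw [e, ff_swap] at this; linarith

lemma asymFlux_ff {p q a b : ℝ} (h : p.HolderConjugate q) (ha : 0 < a) (hb : 0 < b) (v : ℝ) :
    asymFlux p a b (ff q a b v) = v := by
  have key : ∀ a b v : ℝ, 0 < a → 0 < b → 0 ≤ v → asymFlux p a b (ff q a b v) = v := by
    intro a b v ha hb hv
    have hp := h.lt
    have hq := h.symm.lt
    have hm : ff q a b v = a⁻¹ * (v / a) ^ (q - 1) := by
      unfold ff
      rw [max_eq_left hv, max_eq_right (by linarith : -v ≤ 0), zero_div,
        Real.zero_rpow (by linarith)]; ring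
    have h0 : 0 ≤ a⁻¹ * (v / a) ^ (q - 1) := by positivity
    rw [hm]
    unfold asymFlux
    rw [max_eq_left h0, max_eq_right (by linarith), Real.zero_rpow (by linarith), mul_zero, sub_zero,
      Real.mul_rpow (by positivity) (by positivity), ← Real.rpow_mul (by positivity),
      mul_comm (q - 1), hconj_mul h, Real.rpow_one, Real.inv_rpow ha.le, Real.rpow_sub_one ha.ne']
    field_simp
  rcases le_total 0 v with hs | hs
  · exact key a b v ha hb hs
  · have := key b a (-v) hb ha (by linarith)
    have e : ∀ s, asymFlux p b a (-s) = - asymFlux p a b s := by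
      intro s; unfold asymFlux; rw [neg_neg]; ring
    rw [ff_swap, e] at this; linarith

lemma young_asym {p q a b : ℝ} (h : p.HolderConjugate q) (ha : 0 < a) (hb : 0 < b) (w s : ℝ) :
    p * (w * s) - (p - 1) * Ff q a b w ≤ asymE p a b s := by
  have hp := h.lt
  have hw : w = max w 0 - max (-w) 0 := by
    rcases le_total 0 w with hw | hw
    · rw [max_eq_left hw, max_eq_right (by linarith)]; ring
    · rw [max_eq_right hw, max_eq_left (by linarith)]; ring
  have hs : s = max s 0 - max (-s) 0 := by
    rcases le_total 0 s with hs | hs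
    · rw [max_eq_left hs, max_eq_right (by linarith)]; ring
    · rw [max_eq_right hs, max_eq_left (by linarith)]; ring
  have w1 := le_max_right w 0
  have w2 := le_max_right (-w) 0
  have s1 := le_max_right s 0
  have s2 := le_max_right (-s) 0
  have hws : w * s ≤ max w 0 * max s 0 + max (-w) 0 * max (-s) 0 := by
    have e : w * s = (max w 0 - max (-w) 0) * (max s 0 - max (-s) 0) := by rw [← hw, ← hs]
    rw [e]
    nlinarith [mul_nonneg w1 s2, mul_nonneg w2 s1]
  have Y : ∀ a x y : ℝ, 0 < a → 0 ≤ x → 0 ≤ y →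
      p * (x * y) ≤ a ^ p * y ^ p + (p - 1) * (x / a) ^ q := by
    intro a x y ha hx hy
    have := Real.young_inequality_of_nonneg (a := a * y) (b := x / a) (by positivity)
      (by positivity) h
    rw [show a * y * (x / a) = x * y by field_simp, Real.mul_rpow ha.le hy] at this
    have h2 := mul_le_mul_of_nonneg_left this (by linarith : 0 ≤ p)
    refine h2.trans_eq ?_
    have hq := h.symm.lt
    have e := hconj_mul' h
    have : p / q = p - 1 := by rw [div_eq_iff (by linarith)]; exact e.symm
    rw [mul_add, mul_div_cancel₀ _ (by linarith : p ≠ 0), ← this]; ring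
  have y1 := Y a _ _ ha w1 s1
  have y2 := Y b _ _ hb w2 s2
  unfold asymE Ff
  nlinarith [mul_le_mul_of_nonneg_left hws (by linarith : 0 ≤ p)]

/-! ### The generalized arctangent -/

/-- the Riccati density -/
noncomputable def Dn (p q a b v : ℝ) : ℝ := 1 + (p - 1) * Ff q a b v

/-- generalized arctangent -/
noncomputable def TT (p q a b v : ℝ) : ℝ := ∫ x in Set.Iic v, (Dn p q a b x)⁻¹

/-- length of the unit hump -/
noncomputable def Lam (p q a b : ℝ) : ℝ := ∫ x, (Dn p q a b x)⁻¹

/-- generalized tangent -/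
noncomputable def VV (p q a b s : ℝ) : ℝ := Function.invFun (TT p q a b) s

lemma Dn_ge {p q a b : ℝ} (hp : 1 < p) (ha : 0 < a) (hb : 0 < b) (v : ℝ) :
    1 ≤ Dn p q a b v := by
  unfold Dn
  have := Ff_nonneg (q := q) ha hb v
  nlinarith

lemma Dn_pos {p q a b : ℝ} (hp : 1 < p) (ha : 0 < a) (hb : 0 < b) (v : ℝ) :
    0 < Dn p q a b v := lt_of_lt_of_le one_pos (Dn_ge hp ha hb v)

lemma continuous_Dn {p q a b : ℝ} (h : p.HolderConjugate q) (ha : 0 < a) (hb : 0 < b) :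
    Continuous (Dn p q a b) :=
  continuous_const.add (continuous_const.mul (continuous_Ff h.symm.lt ha hb))

lemma continuous_Dn_inv {p q a b : ℝ} (h : p.HolderConjugate q) (ha : 0 < a) (hb : 0 < b) :
    Continuous (fun x => (Dn p q a b x)⁻¹) :=
  (continuous_Dn h ha hb).inv₀ fun x => (Dn_pos h.lt ha hb x).ne'

lemma Lam_swap (p q a b : ℝ) : Lam p q b a = Lam p q a b := by
  unfold Lam
  rw [← MeasureTheory.integral_neg_eq_self]
  simp only [Dn, Ff_swap]

lemma Ff_ge {q a b : ℝ} (hq : 1 < q) (ha : 0 < a) (hb : 0 < b) (v : ℝ) :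
    |v| ^ q / (max a b) ^ q ≤ Ff q a b v := by
  have hM : 0 < max a b := lt_max_of_lt_left ha
  rw [← Real.div_rpow (abs_nonneg v) hM.le]
  unfold Ff
  rcases le_total 0 v with hv | hv
  · rw [abs_of_nonneg hv, max_eq_left hv, max_eq_right (by linarith : -v ≤ 0), zero_div,
      Real.zero_rpow (by linarith), add_zero]
    gcongr
    exact le_max_left _ _
  · rw [abs_of_nonpos hv, max_eq_right hv, max_eq_left (by linarith : 0 ≤ -v), zero_div,
      Real.zero_rpow (by linarith), zero_add]
    have : 0 ≤ -v := by linarith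
    gcongr
    exact le_max_right _ _

lemma integrable_Dn_inv {p q a b : ℝ} (h : p.HolderConjugate q) (ha : 0 < a) (hb : 0 < b) :
    MeasureTheory.Integrable (fun x => (Dn p q a b x)⁻¹) := by
  have hq := h.symm.lt
  have hp := h.lt
  have hM : 0 < max a b := lt_max_of_lt_left ha
  set M := max a b
  set c := min 1 ((p - 1) / M ^ q) with hc
  have hc0 : 0 < c := by
    have : 0 < (p - 1) / M ^ q := div_pos (by linarith) (by positivity)
    exact lt_min one_pos this
  have hI := (integrable_one_add_norm (E := ℝ) (μ := MeasureTheory.volume) (r := q)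
    (by simpa using hq)).const_mul (c⁻¹ * 2 ^ q)
  refine hI.mono' (continuous_Dn_inv h ha hb).aestronglyMeasurable ?_
  filter_upwards with x
  have hD := Dn_pos (q := q) hp ha hb x
  rw [Real.norm_of_nonneg (by positivity)]
  have h1 : (1 + ‖x‖) ^ q ≤ 2 ^ q * (1 + |x| ^ q) := by
    rw [Real.norm_eq_abs]
    have hx := abs_nonneg x
    rcases le_total |x| 1 with h1 | h1
    · calc (1 + |x|) ^ q ≤ 2 ^ q := by
            apply Real.rpow_le_rpow <;> linarith
        _ ≤ 2 ^ q * (1 + |x| ^ q) := by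
            have : 0 ≤ |x| ^ q := by positivity
            have h2 : (0:ℝ) < 2 ^ q := by positivity
            nlinarith
    · calc (1 + |x|) ^ q ≤ (2 * |x|) ^ q := by
            apply Real.rpow_le_rpow <;> linarith
        _ = 2 ^ q * |x| ^ q := Real.mul_rpow (by norm_num) hx
        _ ≤ 2 ^ q * (1 + |x| ^ q) := by gcongr; linarith
  have h2 : c * (1 + |x| ^ q) ≤ Dn p q a b x := by
    unfold Dn
    have e1 := Ff_ge hq ha hb x
    have e2 : c ≤ 1 := min_le_left _ _
    have e3 : c ≤ (p - 1) / M ^ q := min_le_right _ _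
    have e4 : c * |x| ^ q ≤ (p - 1) * Ff q a b x := by
      calc c * |x| ^ q ≤ (p - 1) / M ^ q * |x| ^ q := by gcongr
        _ = (p - 1) * (|x| ^ q / M ^ q) := by ring
        _ ≤ _ := by
          apply mul_le_mul_of_nonneg_left e1; linarith
    linarith
  have hz : 0 < 1 + ‖x‖ := by positivity
  rw [Real.rpow_neg hz.le, inv_eq_one_div, ← div_eq_mul_inv, div_le_div_iff₀ hD (by positivity),
    one_mul]
  calc (1 + ‖x‖) ^ q ≤ 2 ^ q * (1 + |x| ^ q) := h1
    _ = c⁻¹ * 2 ^ q * (c * (1 + |x| ^ q)) := by field_simp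
    _ ≤ _ := by gcongr

lemma TT_eq {p q a b : ℝ} (h : p.HolderConjugate q) (ha : 0 < a) (hb : 0 < b) (v : ℝ) :
    TT p q a b v = TT p q a b 0 + ∫ x in (0:ℝ)..v, (Dn p q a b x)⁻¹ := by
  have hI := integrable_Dn_inv h ha hb
  unfold TT
  rw [← intervalIntegral.integral_Iic_sub_Iic hI.integrableOn hI.integrableOn]
  ring

lemma hasDerivAt_TT {p q a b : ℝ} (h : p.HolderConjugate q) (ha : 0 < a) (hb : 0 < b) (v : ℝ) :
    HasDerivAt (TT p q a b) (Dn p q a b v)⁻¹ v := by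
  have hc := continuous_Dn_inv h ha hb
  have : TT p q a b = fun v => TT p q a b 0 + ∫ x in (0:ℝ)..v, (Dn p q a b x)⁻¹ := by
    funext v; exact TT_eq h ha hb v
  rw [this]
  exact (hc.integral_hasStrictDerivAt 0 v).hasDerivAt.const_add _

lemma strictMono_TT {p q a b : ℝ} (h : p.HolderConjugate q) (ha : 0 < a) (hb : 0 < b) :
    StrictMono (TT p q a b) := by
  refine strictMono_of_hasDerivAt_pos (hasDerivAt_TT h ha hb) fun v => ?_
  exact inv_pos.2 (Dn_pos h.lt ha hb v)

lemma tendsto_TT_atTop {p q a b : ℝ} (h : p.HolderConjugate q) (ha : 0 < a) (hb : 0 < b) :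
    Filter.Tendsto (TT p q a b) Filter.atTop (nhds (Lam p q a b)) := by
  have hI := integrable_Dn_inv h ha hb
  have h1 := (MeasureTheory.intervalIntegral_tendsto_integral_Ioi 0 hI.integrableOn
    Filter.tendsto_id).const_add (TT p q a b 0)
  have e : Lam p q a b = TT p q a b 0 + ∫ x in Set.Ioi 0, (Dn p q a b x)⁻¹ := by
    unfold TT Lam
    rw [intervalIntegral.integral_Iic_add_Ioi hI.integrableOn hI.integrableOn]
  rw [e]
  refine h1.congr fun v => ?_
  rw [TT_eq h ha hb v]; rfl

lemma tendsto_TT_atBot {p q a b : ℝ} (h : p.HolderConjugate q) (ha : 0 < a) (hb : 0 < b) :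
    Filter.Tendsto (TT p q a b) Filter.atBot (nhds 0) := by
  have hI := integrable_Dn_inv h ha hb
  have h1 := (MeasureTheory.intervalIntegral_tendsto_integral_Iic 0 hI.integrableOn
    Filter.tendsto_id).const_sub (TT p q a b 0)
  have e : TT p q a b 0 - ∫ x in Set.Iic 0, (Dn p q a b x)⁻¹ = 0 := by
    unfold TT; ring
  rw [e] at h1
  refine h1.congr fun v => ?_
  rw [TT_eq h ha hb v, intervalIntegral.integral_symm]
  simp

lemma TT_pos {p q a b : ℝ} (h : p.HolderConjugate q) (ha : 0 < a) (hb : 0 < b) (v : ℝ) :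
    0 < TT p q a b v := by
  have hm := strictMono_TT h ha hb
  have : 0 ≤ TT p q a b (v - 1) := hm.monotone.le_of_tendsto (tendsto_TT_atBot h ha hb) _
  exact this.trans_lt (hm (by linarith))

lemma TT_lt {p q a b : ℝ} (h : p.HolderConjugate q) (ha : 0 < a) (hb : 0 < b) (v : ℝ) :
    TT p q a b v < Lam p q a b := by
  have hm := strictMono_TT h ha hb
  have : TT p q a b (v + 1) ≤ Lam p q a b := hm.monotone.ge_of_tendsto (tendsto_TT_atTop h ha hb) _
  exact (hm (by linarith)).trans_le this

lemma Lam_pos {p q a b : ℝ} (h : p.HolderConjugate q) (ha : 0 < a) (hb : 0 < b) :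
    0 < Lam p q a b := (TT_pos h ha hb 0).trans (TT_lt h ha hb 0)

lemma TT_VV {p q a b : ℝ} (h : p.HolderConjugate q) (ha : 0 < a) (hb : 0 < b) {s : ℝ}
    (h0 : 0 < s) (h1 : s < Lam p q a b) : TT p q a b (VV p q a b s) = s := by
  apply Function.invFun_eq
  have hc : Continuous (TT p q a b) :=
    continuous_iff_continuousAt.2 fun v => (hasDerivAt_TT h ha hb v).continuousAt
  have e1 := ((tendsto_TT_atBot h ha hb).eventually (gt_mem_nhds h0)).exists
  have e2 := ((tendsto_TT_atTop h ha hb).eventually (lt_mem_nhds h1)).exists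
  obtain ⟨x, hx⟩ := e1
  obtain ⟨y, hy⟩ := e2
  exact mem_range_of_exists_le_of_exists_ge hc ⟨x, hx.le⟩ ⟨y, hy.le⟩

lemma lt_VV_iff {p q a b : ℝ} (h : p.HolderConjugate q) (ha : 0 < a) (hb : 0 < b) {s : ℝ}
    (h0 : 0 < s) (h1 : s < Lam p q a b) (y : ℝ) : y < VV p q a b s ↔ TT p q a b y < s := by
  conv_rhs => rw [← TT_VV h ha hb h0 h1]
  exact (strictMono_TT h ha hb).lt_iff_lt.symm

lemma VV_lt_iff {p q a b : ℝ} (h : p.HolderConjugate q) (ha : 0 < a) (hb : 0 < b) {s : ℝ}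
    (h0 : 0 < s) (h1 : s < Lam p q a b) (y : ℝ) : VV p q a b s < y ↔ s < TT p q a b y := by
  conv_rhs => rw [← TT_VV h ha hb h0 h1]
  exact (strictMono_TT h ha hb).lt_iff_lt.symm

lemma hasDerivAt_VV {p q a b : ℝ} (h : p.HolderConjugate q) (ha : 0 < a) (hb : 0 < b) {s : ℝ}
    (h0 : 0 < s) (h1 : s < Lam p q a b) :
    HasDerivAt (VV p q a b) (Dn p q a b (VV p q a b s)) s := by
  have hev : ∀ᶠ t in nhds s, t ∈ Set.Ioo 0 (Lam p q a b) := Ioo_mem_nhds h0 h1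
  have hc : ContinuousAt (VV p q a b) s := by
    refine tendsto_order.2 ⟨fun y hy => ?_, fun y hy => ?_⟩
    · rw [lt_VV_iff h ha hb h0 h1] at hy
      filter_upwards [hev, Ioi_mem_nhds hy] with t ht hyt
      rwa [lt_VV_iff h ha hb ht.1 ht.2]
    · rw [gt_iff_lt, VV_lt_iff h ha hb h0 h1] at hy
      filter_upwards [hev, Iio_mem_nhds hy] with t ht hyt
      rwa [VV_lt_iff h ha hb ht.1 ht.2]
  have := HasDerivAt.of_local_left_inverse hc (hasDerivAt_TT h ha hb (VV p q a b s))
    (inv_pos.2 (Dn_pos h.lt ha hb _)).ne' (by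
      filter_upwards [hev] with t ht
      exact TT_VV h ha hb ht.1 ht.2)
  rwa [inv_inv] at this

lemma tendsto_VV_top {p q a b : ℝ} (h : p.HolderConjugate q) (ha : 0 < a) (hb : 0 < b) :
    Filter.Tendsto (VV p q a b) (nhdsWithin (Lam p q a b) (Set.Iio (Lam p q a b))) Filter.atTop := by
  refine Filter.tendsto_atTop.2 fun y => ?_
  filter_upwards [self_mem_nhdsWithin,
    nhdsWithin_le_nhds (Ioi_mem_nhds (TT_lt h ha hb y))] with t ht hy
  exact ((lt_VV_iff h ha hb ((TT_pos h ha hb y).trans hy) ht y).2 hy).le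

lemma tendsto_VV_bot {p q a b : ℝ} (h : p.HolderConjugate q) (ha : 0 < a) (hb : 0 < b) :
    Filter.Tendsto (VV p q a b) (nhdsWithin 0 (Set.Ioi 0)) Filter.atBot := by
  refine Filter.tendsto_atBot.2 fun y => ?_
  filter_upwards [self_mem_nhdsWithin,
    nhdsWithin_le_nhds (Iio_mem_nhds (TT_pos h ha hb y))] with t ht hy
  exact ((VV_lt_iff h ha hb ht (lt_trans hy (TT_lt h ha hb y)) y).2 hy).le

/-! ### Lower bound for the energy -/

lemma ftcI {α β : ℝ} (hab : α ≤ β) {f f' : ℝ → ℝ}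
    (hf : ∀ t ∈ Set.Icc α β, HasDerivWithinAt f (f' t) (Set.Icc α β) t)
    (hc : ContinuousOn f' (Set.Icc α β)) : ∫ t in α..β, f' t = f β - f α := by
  refine intervalIntegral.integral_eq_sub_of_hasDerivAt_of_le hab
    (fun t ht => (hf t ht).continuousWithinAt) (fun t ht => ?_) ?_
  · exact (hf t (Set.Ioo_subset_Icc_self ht)).hasDerivAt (Icc_mem_nhds ht.1 ht.2)
  · exact ContinuousOn.intervalIntegrable_of_Icc hab hc

lemma exists_riccati {p q a b L κ : ℝ} (h : p.HolderConjugate q) (ha : 0 < a) (hb : 0 < b)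
    (hκ : 0 < κ) (hLκ : κ * L < Lam p q a b) :
    ∃ W : ℝ → ℝ, ∀ t ∈ Set.Icc 0 L, HasDerivAt W (-(κ ^ p + (p - 1) * Ff q a b (W t))) t := by
  set δ := (Lam p q a b - κ * L) / 2 with hδ
  refine ⟨fun t => κ ^ (p - 1) * VV p q a b (Lam p q a b - δ - κ * t), fun t ht => ?_⟩
  have h1 : κ * t ≤ κ * L := mul_le_mul_of_nonneg_left ht.2 hκ.le
  have h2 : 0 ≤ κ * t := mul_nonneg hκ.le ht.1
  have hd := hasDerivAt_VV h ha hb (s := Lam p q a b - δ - κ * t) (by linarith) (by linarith)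
  have hl : HasDerivAt (fun t : ℝ => Lam p q a b - δ - κ * t) (-κ) t := by
    simpa using ((hasDerivAt_id t).const_mul κ).const_sub (Lam p q a b - δ)
  refine ((hd.comp t hl).const_mul (κ ^ (p - 1))).congr_deriv ?_
  rw [Ff_homog h ha hb hκ.le, Dn, Real.rpow_sub_one hκ.ne']
  field_simp

lemma energy_lower {p q a b L κ : ℝ} (h : p.HolderConjugate q) (ha : 0 < a) (hb : 0 < b)
    (hL : 0 < L) (hκ : 0 < κ) (hLκ : κ * L < Lam p q a b) {u u' : ℝ → ℝ} (hu : Adm L u u') :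
    κ ^ p * (∫ t in (0:ℝ)..L, |u t| ^ p) ≤ ∫ t in (0:ℝ)..L, asymE p a b (u' t) := by
  have hp := h.lt
  have hq := h.symm.lt
  obtain ⟨W, hW⟩ := exists_riccati h ha hb hκ hLκ
  obtain ⟨X, hX⟩ := exists_riccati h hb ha hκ (by rwa [Lam_swap])
  obtain ⟨⟨hd, hc'⟩, hu0, huL⟩ := hu
  have hcu : ContinuousOn u (Set.Icc 0 L) := fun t ht => (hd t ht).continuousWithinAt
  have hcW : ContinuousOn W (Set.Icc 0 L) := fun t ht => (hW t ht).continuousAt.continuousWithinAt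
  have hcX : ContinuousOn X (Set.Icc 0 L) := fun t ht => (hX t ht).continuousAt.continuousWithinAt
  set S' : ℝ → ℝ := fun t =>
    (-(κ ^ p + (p - 1) * Ff q a b (W t)) * (max (u t) 0) ^ p
      + W t * (p * (max (u t) 0) ^ (p - 1) * u' t)) +
    (-(κ ^ p + (p - 1) * Ff q b a (X t)) * (max (-u t) 0) ^ p
      + X t * (-(p * (max (-u t) 0) ^ (p - 1)) * u' t)) with hS'
  have hcS : ContinuousOn S' (Set.Icc 0 L) := by
    have c1 := (continuous_posPow (r := p) (by linarith)).comp_continuousOn hcu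
    have c2 := (continuous_posPow (r := p - 1) (by linarith)).comp_continuousOn hcu
    have c3 := (continuous_negPow (r := p) (by linarith)).comp_continuousOn hcu
    have c4 := (continuous_negPow (r := p - 1) (by linarith)).comp_continuousOn hcu
    have c5 := (continuous_Ff hq ha hb).comp_continuousOn hcW
    have c6 := (continuous_Ff hq hb ha).comp_continuousOn hcX
    exact (((continuousOn_const.add (continuousOn_const.mul c5)).neg.mul c1).add
      (hcW.mul ((continuousOn_const.mul c2).mul hc'))).add
      (((continuousOn_const.add (continuousOn_const.mul c6)).neg.mul c3).add
      (hcX.mul ((continuousOn_const.mul c4).neg.mul hc')))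
  have hint := ftcI hL.le (f := fun t => W t * (max (u t) 0) ^ p + X t * (max (-u t) 0) ^ p)
    (f' := S') (fun t ht => by
      have d1 := (hasDerivAt_posPow hp (u t)).comp_hasDerivWithinAt t (hd t ht)
      have d2 := (hasDerivAt_negPow hp (u t)).comp_hasDerivWithinAt t (hd t ht)
      exact ((hW t ht).hasDerivWithinAt.mul d1).add ((hX t ht).hasDerivWithinAt.mul d2)) hcS
  have hz : (0:ℝ) ^ p = 0 := Real.zero_rpow (by linarith)
  have hz' : (0:ℝ) ^ (p - 1) = 0 := Real.zero_rpow (by linarith)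
  simp only [hu0, huL, neg_zero, max_self, hz, mul_zero, add_zero, sub_zero] at hint
  have hpt : ∀ t ∈ Set.Icc 0 L, S' t + κ ^ p * |u t| ^ p ≤ asymE p a b (u' t) := by
    intro t _
    rcases le_total 0 (u t) with h0 | h0
    · have hy := young_asym h ha hb ((u t) ^ (p - 1) * W t) (u' t)
      rw [Ff_homog h ha hb h0] at hy
      refine le_trans (le_of_eq ?_) hy
      simp only [hS', max_eq_left h0, max_eq_right (by linarith : -u t ≤ 0), hz, hz',
        abs_of_nonneg h0]
      ring
    · have hy := young_asym h hb ha ((-u t) ^ (p - 1) * X t) (-u' t)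
      have e : asymE p b a (-u' t) = asymE p a b (u' t) := by
        unfold asymE; rw [neg_neg]; ring
      rw [Ff_homog h hb ha (by linarith : 0 ≤ -u t), e] at hy
      refine le_trans (le_of_eq ?_) hy
      simp only [hS', max_eq_right h0, max_eq_left (by linarith : 0 ≤ -u t), hz, hz',
        abs_of_nonpos h0]
      ring
  have hcabs : ContinuousOn (fun t => κ ^ p * |u t| ^ p) (Set.Icc 0 L) :=
    continuousOn_const.mul (hcu.abs.rpow_const fun _ _ => Or.inr (by linarith))
  have i1 := ContinuousOn.intervalIntegrable_of_Icc (μ := MeasureTheory.volume) hL.le hcS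
  have i2 := ContinuousOn.intervalIntegrable_of_Icc (μ := MeasureTheory.volume) hL.le hcabs
  have i3 := ContinuousOn.intervalIntegrable_of_Icc (μ := MeasureTheory.volume) hL.le
    ((continuous_asymE hp a b).comp_continuousOn hc')
  have hm := intervalIntegral.integral_mono_on hL.le (i1.add i2) i3 hpt
  rw [intervalIntegral.integral_add i1 i2, hint, intervalIntegral.integral_const_mul] at hm
  simpa using hm

/-! ### The first order system -/

/-- first-order system on `[α, β]` -/
def Sys (p q a b μ ν α β : ℝ) (u z : ℝ → ℝ) : Prop :=
  (∀ t ∈ Set.Icc α β, HasDerivWithinAt u (ff q a b (z t)) (Set.Icc α β) t) ∧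
  (∀ t ∈ Set.Icc α β, HasDerivWithinAt z (-(gg p μ ν (u t))) (Set.Icc α β) t)

lemma Sys.contU {p q a b μ ν α β : ℝ} {u z : ℝ → ℝ} (hs : Sys p q a b μ ν α β u z) :
    ContinuousOn u (Set.Icc α β) := fun t ht => (hs.1 t ht).continuousWithinAt

lemma Sys.contZ {p q a b μ ν α β : ℝ} {u z : ℝ → ℝ} (hs : Sys p q a b μ ν α β u z) :
    ContinuousOn z (Set.Icc α β) := fun t ht => (hs.2 t ht).continuousWithinAt

lemma Sys.swap {p q a b μ ν α β : ℝ} {u z : ℝ → ℝ} (hs : Sys p q a b μ ν α β u z) :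
    Sys p q b a ν μ α β (fun t => -u t) (fun t => -z t) := by
  refine ⟨fun t ht => ?_, fun t ht => ?_⟩
  · rw [ff_swap]; exact (hs.1 t ht).neg
  · rw [gg_swap]; exact (hs.2 t ht).neg

lemma Sys.mono {p q a b μ ν α β γ δ : ℝ} {u z : ℝ → ℝ} (hs : Sys p q a b μ ν α β u z)
    (h1 : α ≤ γ) (h2 : δ ≤ β) : Sys p q a b μ ν γ δ u z := by
  have hsub : Set.Icc γ δ ⊆ Set.Icc α β := Set.Icc_subset_Icc h1 h2
  exact ⟨fun t ht => (hs.1 t (hsub ht)).mono hsub, fun t ht => (hs.2 t (hsub ht)).mono hsub⟩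

/-- A system yields a weak solution. -/
lemma Sys.weak {p q a b μ ν L : ℝ} (h : p.HolderConjugate q) (ha : 0 < a) (hb : 0 < b)
    (hL : 0 < L) {u z : ℝ → ℝ} (hs : Sys p q a b μ ν 0 L u z) (h0 : u 0 = 0) (h1 : u L = 0) :
    IsWeakSol p a b L u (fun t => ff q a b (z t)) (fun t => gg p μ ν (u t)) := by
  refine ⟨⟨⟨hs.1, (continuous_ff h.symm.lt ha hb).comp_continuousOn hs.contZ⟩, h0, h1⟩, ?_⟩
  rintro φ φ' ⟨⟨hφ, hφc⟩, hφ0, hφL⟩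
  simp only [asymFlux_ff h ha hb]
  have cφ : ContinuousOn φ (Set.Icc 0 L) := fun t ht => (hφ t ht).continuousWithinAt
  have cg := (continuous_gg h.lt μ ν).comp_continuousOn hs.contU
  have i1 := ContinuousOn.intervalIntegrable_of_Icc (μ := MeasureTheory.volume) hL.le
    (cg.neg.mul cφ)
  have i2 := ContinuousOn.intervalIntegrable_of_Icc (μ := MeasureTheory.volume) hL.le
    (hs.contZ.mul hφc)
  have hint := ftcI hL.le (f := fun t => z t * φ t)
    (f' := fun t => -(gg p μ ν (u t)) * φ t + z t * φ' t)
    (fun t ht => (hs.2 t ht).mul (hφ t ht)) ((cg.neg.mul cφ).add (hs.contZ.mul hφc))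
  have hadd := intervalIntegral.integral_add i1 i2
  simp only [hφ0, hφL, mul_zero, sub_zero] at hint
  have e : ∫ t in (0:ℝ)..L, -(gg p μ ν (u t)) * φ t = - ∫ t in (0:ℝ)..L, gg p μ ν (u t) * φ t := by
    rw [← intervalIntegral.integral_neg]; simp
  have hadd' : (∫ t in (0:ℝ)..L, (-(gg p μ ν (u t)) * φ t + z t * φ' t)) =
    (∫ t in (0:ℝ)..L, -(gg p μ ν (u t)) * φ t) + ∫ t in (0:ℝ)..L, z t * φ' t := hadd
  rw [hint, e] at hadd'
  linarith

/-- A weak solution yields a system. -/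
lemma weak_sys {p q a b μ ν L : ℝ} (h : p.HolderConjugate q) (ha : 0 < a) (hb : 0 < b)
    (hL : 0 < L) {u u' : ℝ → ℝ}
    (hw : IsWeakSol p a b L u u' (fun t => gg p μ ν (u t))) :
    Sys p q a b μ ν 0 L u (fun t => asymFlux p a b (u' t)) := by
  obtain ⟨⟨⟨hu, hu'⟩, h0, h1⟩, hw⟩ := hw
  refine ⟨fun t ht => by rw [ff_asymFlux h ha hb]; exact hu t ht, ?_⟩
  have cu : ContinuousOn u (Set.Icc 0 L) := fun t ht => (hu t ht).continuousWithinAt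
  have cg : ContinuousOn (fun t => gg p μ ν (u t)) (Set.Icc 0 L) :=
    (continuous_gg h.lt μ ν).comp_continuousOn cu
  have cz : ContinuousOn (fun t => asymFlux p a b (u' t)) (Set.Icc 0 L) :=
    (continuous_asymFlux h.lt a b).comp_continuousOn hu'
  have prim : ∀ f : ℝ → ℝ, ContinuousOn f (Set.Icc 0 L) →
      ∀ t ∈ Set.Icc 0 L, HasDerivWithinAt (fun x => ∫ s in (0:ℝ)..x, f s) (f t) (Set.Icc 0 L) t := by
    intro f hf t ht
    have hu : Set.uIcc 0 L = Set.Icc 0 L := Set.uIcc_of_le hL.le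
    have : Fact (t ∈ Set.Icc 0 L) := ⟨ht⟩
    have hi : IntervalIntegrable f MeasureTheory.volume 0 t :=
      ContinuousOn.intervalIntegrable_of_Icc ht.1 (hf.mono (Set.Icc_subset_Icc_right ht.2))
    refine intervalIntegral.integral_hasDerivWithinAt_right hi
      (s := Set.Icc 0 L) (t := Set.Icc 0 L) ?_ (hf t ht)
    exact hf.stronglyMeasurableAtFilter_nhdsWithin measurableSet_Icc t
  set G : ℝ → ℝ := fun x => ∫ s in (0:ℝ)..x, gg p μ ν (u s) with hG
  have hGd := prim _ cg
  have cG : ContinuousOn G (Set.Icc 0 L) := fun t ht => (hGd t ht).continuousWithinAt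
  set y : ℝ → ℝ := fun t => asymFlux p a b (u' t) + G t with hy
  have cy : ContinuousOn y (Set.Icc 0 L) := cz.add cG
  set m : ℝ := (∫ s in (0:ℝ)..L, y s) / L with hm
  have cym : ContinuousOn (fun t => y t - m) (Set.Icc 0 L) := cy.sub continuousOn_const
  have iy := ContinuousOn.intervalIntegrable_of_Icc (μ := MeasureTheory.volume) hL.le cy
  have hφd := prim _ cym
  set φ : ℝ → ℝ := fun x => ∫ s in (0:ℝ)..x, (y s - m) with hφ
  have cφ : ContinuousOn φ (Set.Icc 0 L) := fun t ht => (hφd t ht).continuousWithinAt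
  have φ0 : φ 0 = 0 := by simp [hφ]
  have φL : φ L = 0 := by
    simp only [hφ]
    rw [intervalIntegral.integral_sub iy (by simp), intervalIntegral.integral_const, hm]
    simp; field_simp; ring
  have hwφ := hw φ (fun t => y t - m) ⟨⟨hφd, cym⟩, φ0, φL⟩
  have e1 := ftcI hL.le (f := fun t => G t * φ t)
    (f' := fun t => gg p μ ν (u t) * φ t + G t * (y t - m))
    (fun t ht => (hGd t ht).mul (hφd t ht)) ((cg.mul cφ).add (cG.mul cym))
  have e2 := ftcI hL.le hφd cym
  have ii : ∀ {f : ℝ → ℝ}, ContinuousOn f (Set.Icc 0 L) →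
      IntervalIntegrable f MeasureTheory.volume 0 L := fun hf =>
    ContinuousOn.intervalIntegrable_of_Icc (μ := MeasureTheory.volume) hL.le hf
  have c1 : ContinuousOn (fun t => gg p μ ν (u t) * φ t) (Set.Icc 0 L) := cg.mul cφ
  have c2 : ContinuousOn (fun t => G t * (y t - m)) (Set.Icc 0 L) := cG.mul cym
  have c3 : ContinuousOn (fun t => asymFlux p a b (u' t) * (y t - m)) (Set.Icc 0 L) := cz.mul cym
  have c4 : ContinuousOn (fun t => m * (y t - m)) (Set.Icc 0 L) := continuousOn_const.mul cym
  have c5 : ContinuousOn (fun t => asymFlux p a b (u' t) * (y t - m) + G t * (y t - m))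
    (Set.Icc 0 L) := c3.add c2
  rw [intervalIntegral.integral_add (ii c1) (ii c2)] at e1
  simp only [φ0, φL, mul_zero, sub_zero] at e1 e2
  have e3 : ∫ t in (0:ℝ)..L, (y t - m) * (y t - m) = 0 := by
    have : (fun t => (y t - m) * (y t - m)) = fun t =>
        (asymFlux p a b (u' t) * (y t - m) + G t * (y t - m)) - m * (y t - m) := by
      funext t; simp only [hy]; ring
    rw [this, intervalIntegral.integral_sub (ii c5) (ii c4),
      intervalIntegral.integral_add (ii c3) (ii c2),
      intervalIntegral.integral_const_mul, e2, hwφ]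
    linarith
  have e4 : ∀ t ∈ Set.Icc 0 L, y t = m := by
    by_contra hcon
    push Not at hcon
    obtain ⟨t, ht, hne⟩ := hcon
    have := intervalIntegral.integral_pos hL (cym.mul cym) (fun x _ => mul_self_nonneg _)
      ⟨t, ht, mul_self_pos.2 (sub_ne_zero.2 hne)⟩
    have e5 : (∫ t in (0:ℝ)..L, (y t - m) * (y t - m)) > 0 := this
    linarith
  intro t ht
  have hd : HasDerivWithinAt (fun t => m - G t) (-(gg p μ ν (u t))) (Set.Icc 0 L) t :=
    (hGd t ht).const_sub m
  refine hd.congr (fun x hx => ?_) ?_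
  · have := e4 x hx; simp only [hy] at this; linarith
  · have := e4 t ht; simp only [hy] at this; linarith

/-! ### Analysis of solutions -/

lemma Sys.energy {p q a b μ ν α β : ℝ} (h : p.HolderConjugate q) (ha : 0 < a) (hb : 0 < b)
    {u z : ℝ → ℝ} (hs : Sys p q a b μ ν α β u z) {t : ℝ} (ht : t ∈ Set.Icc α β) :
    (p - 1) * Ff q a b (z t) + (μ * (max (u t) 0) ^ p + ν * (max (-u t) 0) ^ p) =
    (p - 1) * Ff q a b (z α) + (μ * (max (u α) 0) ^ p + ν * (max (-u α) 0) ^ p) := by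
  have hs' := hs.mono le_rfl ht.2
  have := ftcI ht.1 (f := fun t => (p - 1) * Ff q a b (z t) +
      (μ * (max (u t) 0) ^ p + ν * (max (-u t) 0) ^ p)) (f' := fun _ => 0) (fun x hx => by
    have d1 := (hasDerivAt_posPow h.lt (u x)).comp_hasDerivWithinAt x (hs'.1 x hx)
    have d2 := (hasDerivAt_negPow h.lt (u x)).comp_hasDerivWithinAt x (hs'.1 x hx)
    have d3 := (hasDerivAt_Ff h.symm.lt ha hb (z x)).comp_hasDerivWithinAt x (hs'.2 x hx)
    refine ((d3.const_mul (p - 1)).add ((d1.const_mul μ).add (d2.const_mul ν))).congr_deriv ?_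
    have e := hconj_mul' h
    simp only [gg]
    rw [show (p - 1) * (q * ff q a b (z x) * -(μ * max (u x) 0 ^ (p - 1) -
      ν * max (-u x) 0 ^ (p - 1))) = ((p - 1) * q) * (ff q a b (z x) *
        -(μ * max (u x) 0 ^ (p - 1) - ν * max (-u x) 0 ^ (p - 1))) by ring, e]
    ring) continuousOn_const
  simp at this
  linarith

lemma Sys.hasDerivAt_TTV {p q a b κ ν α β : ℝ} (h : p.HolderConjugate q) (ha : 0 < a)
    (hb : 0 < b) (hκ : 0 < κ) {u z : ℝ → ℝ} (hs : Sys p q a b (κ ^ p) ν α β u z) {t : ℝ}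
    (ht : t ∈ Set.Ioo α β) (hut : 0 < u t) :
    HasDerivAt (fun t => TT p q a b (z t / (κ * u t) ^ (p - 1))) (-κ) t := by
  have hn : Set.Icc α β ∈ nhds t := Icc_mem_nhds ht.1 ht.2
  have du := (hs.1 t (Set.Ioo_subset_Icc_self ht)).hasDerivAt hn
  have dz := (hs.2 t (Set.Ioo_subset_Icc_self ht)).hasDerivAt hn
  have hx : 0 < κ * u t := mul_pos hκ hut
  have hB : 0 < (κ * u t) ^ (p - 1) := by positivity
  have dB := (du.const_mul κ).rpow_const (p := p - 1) (Or.inl hx.ne')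
  have dV := dz.div dB hB.ne'
  have dT := (hasDerivAt_TT h ha hb (z t / (κ * u t) ^ (p - 1))).comp t dV
  refine dT.congr_deriv ?_
  set V := z t / (κ * u t) ^ (p - 1) with hV
  have hz : z t = (κ * u t) ^ (p - 1) * V := by rw [hV]; field_simp
  have hg : gg p (κ ^ p) ν (u t) = κ * (κ * u t) ^ (p - 1) := by
    unfold gg
    rw [max_eq_left hut.le, max_eq_right (by linarith : -u t ≤ 0),
      Real.zero_rpow (by have := h.lt; linarith), Real.mul_rpow hκ.le hut.le,
      Real.rpow_sub_one hκ.ne']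
    field_simp; ring
  have hD := Dn_pos (q := q) h.lt ha hb V
  have hDe : Dn p q a b V = 1 + (p - 1) * (V * ff q a b V) := by
    rw [mul_ff h.symm.lt ha hb]; rfl
  rw [hg, hz, ff_homog h ha hb hx.le, Real.rpow_sub_one hx.ne' (p - 1)]
  rw [inv_mul_eq_iff_eq_mul₀ hD.ne', hDe]
  field_simp
  ring

lemma nextzero {p q a b κ ν α L : ℝ} (h : p.HolderConjugate q) (ha : 0 < a)
    (hb : 0 < b) (hκ : 0 < κ) {u z : ℝ → ℝ} (hs : Sys p q a b (κ ^ p) ν α L u z)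
    (hαL : α < L) (hα : u α = 0) (hzα : 0 < z α) (huL : u L = 0) :
    ∃ β ∈ Set.Ioc α L, β - α = Lam p q a b / κ ∧ u β = 0 ∧ z β < 0 := by
  have hp := h.lt
  have hq := h.symm.lt
  -- positive near α
  obtain ⟨γ, hγ, hpos⟩ : ∃ γ ∈ Set.Ioi α, Set.Ioo α γ ⊆ {t | 0 < u t} := by
    rw [← mem_nhdsGT_iff_exists_Ioo_subset]
    have hd := ((hs.1 α ⟨le_rfl, hαL.le⟩).mono_of_mem_nhdsWithin (Icc_mem_nhdsGE hαL)).Ioi_of_Ici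
    rw [hasDerivWithinAt_iff_tendsto_slope' (by simp)] at hd
    filter_upwards [hd.eventually (lt_mem_nhds (ff_pos_of_pos (b := b) hq ha hzα)),
      self_mem_nhdsWithin] with t h1 h2
    rw [slope_def_field, hα, sub_zero] at h1
    have h2' : 0 < t - α := sub_pos.2 h2
    exact (div_pos_iff_of_pos_right h2').1 h1
  have hγL : γ ≤ L := by
    by_contra hcon
    have : 0 < u L := hpos ⟨hαL, not_le.1 hcon⟩
    linarith
  have hγ' : α < γ := hγ
  have cu := hs.contU
  set Z := Set.Icc γ L ∩ u ⁻¹' Set.Iic 0 with hZ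
  have hsub : Set.Icc γ L ⊆ Set.Icc α L := Set.Icc_subset_Icc_left hγ'.le
  have hZc : IsCompact Z := by
    have : IsClosed Z := (cu.mono hsub).preimage_isClosed_of_isClosed isClosed_Icc isClosed_Iic
    exact isCompact_Icc.of_isClosed_subset this Set.inter_subset_left
  have hZn : Z.Nonempty := ⟨L, ⟨hγL, le_rfl⟩, huL.le⟩
  set β := sInf Z with hβ
  have hβZ : β ∈ Z := hZc.sInf_mem hZn
  have hγβ : γ ≤ β := hβZ.1.1
  have hβL : β ≤ L := hβZ.1.2
  have hαβ : α < β := hγ'.trans_le hγβ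
  have hupos : ∀ t ∈ Set.Ioo α β, 0 < u t := by
    intro t ht
    rcases lt_or_ge t γ with h1 | h1
    · exact hpos ⟨ht.1, h1⟩
    · by_contra hcon
      have : t ∈ Z := ⟨⟨h1, ht.2.le.trans hβL⟩, not_lt.1 hcon⟩
      exact absurd (csInf_le hZc.bddBelow this) (not_le.2 ht.2)
  have hs' := hs.mono le_rfl hβL
  -- one-sided limits
  have tα : ∀ f : ℝ → ℝ, ContinuousOn f (Set.Icc α β) →
      Filter.Tendsto f (nhdsWithin α (Set.Ioi α)) (nhds (f α)) := by
    intro f hf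
    have := hf α ⟨le_rfl, hαβ.le⟩
    exact this.mono_left (nhdsWithin_le_of_mem (Icc_mem_nhdsGT hαβ))
  have tβ : ∀ f : ℝ → ℝ, ContinuousOn f (Set.Icc α β) →
      Filter.Tendsto f (nhdsWithin β (Set.Iio β)) (nhds (f β)) := by
    intro f hf
    have := hf β ⟨hαβ.le, le_rfl⟩
    exact this.mono_left (nhdsWithin_le_of_mem (Icc_mem_nhdsLT hαβ))
  have eα : ∀ᶠ t in nhdsWithin α (Set.Ioi α), t ∈ Set.Ioo α β := Ioo_mem_nhdsGT hαβ
  have eβ : ∀ᶠ t in nhdsWithin β (Set.Iio β), t ∈ Set.Ioo α β := Ioo_mem_nhdsLT hαβ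
  have huβ : u β = 0 := by
    refine le_antisymm hβZ.2 (ge_of_tendsto (tβ u hs'.contU) ?_)
    filter_upwards [eβ] with t ht using (hupos t ht).le
  have hzβ : z β ≠ 0 := by
    intro hz0
    have := hs'.energy h ha hb (t := β) ⟨hαβ.le, le_rfl⟩
    rw [huβ, hα, hz0, ← mul_ff hq ha hb 0, ← mul_ff hq ha hb (z α)] at this
    have h1 := mul_pos (by linarith : 0 < p - 1) (mul_pos hzα (ff_pos_of_pos (b := b) hq ha hzα))
    linarith
  -- the angle
  set Ψ : ℝ → ℝ := fun t => TT p q a b (z t / (κ * u t) ^ (p - 1)) + κ * t with hΨ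
  have hconst : ∀ t ∈ Set.Ioo α β, Ψ t = Ψ ((α + β) / 2) := by
    have hdΨ : ∀ t ∈ Set.Ioo α β, HasDerivAt Ψ 0 t := by
      intro t ht
      have := (hs'.hasDerivAt_TTV h ha hb hκ ht (hupos t ht)).add
        ((hasDerivAt_id t).const_mul κ)
      refine this.congr_deriv ?_
      ring
    intro t ht
    refine isOpen_Ioo.is_const_of_deriv_eq_zero isPreconnected_Ioo
      (fun x hx => (hdΨ x hx).differentiableAt.differentiableWithinAt)
      (fun x hx => (hdΨ x hx).deriv) ht ⟨by linarith, by linarith⟩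
  -- denominators
  have cB : ContinuousOn (fun t => (κ * u t) ^ (p - 1)) (Set.Icc α β) :=
    (continuousOn_const.mul hs'.contU).rpow_const fun _ _ => Or.inr (by linarith)
  have hinv : ∀ l : Filter ℝ, (∀ᶠ t in l, t ∈ Set.Ioo α β) →
      Filter.Tendsto (fun t => (κ * u t) ^ (p - 1)) l (nhds 0) →
      Filter.Tendsto (fun t => ((κ * u t) ^ (p - 1))⁻¹) l Filter.atTop := by
    intro l hl ht
    refine Filter.Tendsto.inv_tendsto_nhdsGT_zero ?_
    refine tendsto_nhdsWithin_iff.2 ⟨ht, ?_⟩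
    filter_upwards [hl] with t ht
    have : 0 < κ * u t := mul_pos hκ (hupos t ht)
    exact Real.rpow_pos_of_pos this _
  have iα := hinv _ eα (by
    have := tα _ cB
    rwa [hα, mul_zero, Real.zero_rpow (by linarith)] at this)
  have iβ := hinv _ eβ (by
    have := tβ _ cB
    rwa [huβ, mul_zero, Real.zero_rpow (by linarith)] at this)
  have limα : Filter.Tendsto Ψ (nhdsWithin α (Set.Ioi α)) (nhds (Lam p q a b + κ * α)) := by
    refine Filter.Tendsto.add ?_ (tα (fun t => κ * t) (by fun_prop))
    exact (tendsto_TT_atTop h ha hb).comp ((tα z hs'.contZ).pos_mul_atTop hzα iα)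
  have cα : Ψ ((α + β) / 2) = Lam p q a b + κ * α :=
    tendsto_nhds_unique (tendsto_const_nhds.congr' (by
      filter_upwards [eα] with t ht using (hconst t ht).symm)) limα
  have hcβ : Filter.Tendsto Ψ (nhdsWithin β (Set.Iio β)) (nhds (Ψ ((α + β) / 2))) :=
    tendsto_const_nhds.congr' (by filter_upwards [eβ] with t ht using (hconst t ht).symm)
  rcases lt_or_gt_of_ne hzβ with hneg | hpos'
  · have limβ : Filter.Tendsto Ψ (nhdsWithin β (Set.Iio β)) (nhds (0 + κ * β)) := by
      refine Filter.Tendsto.add ?_ (tβ (fun t => κ * t) (by fun_prop))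
      exact (tendsto_TT_atBot h ha hb).comp ((tβ z hs'.contZ).neg_mul_atTop hneg iβ)
    have := tendsto_nhds_unique limβ hcβ
    refine ⟨β, ⟨hαβ, hβL⟩, ?_, huβ, hneg⟩
    rw [eq_div_iff hκ.ne']
    linarith
  · exfalso
    have limβ : Filter.Tendsto Ψ (nhdsWithin β (Set.Iio β)) (nhds (Lam p q a b + κ * β)) := by
      refine Filter.Tendsto.add ?_ (tβ (fun t => κ * t) (by fun_prop))
      exact (tendsto_TT_atTop h ha hb).comp ((tβ z hs'.contZ).pos_mul_atTop hpos' iβ)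
    have := tendsto_nhds_unique limβ hcβ
    have : κ * β = κ * α := by linarith
    have := mul_left_cancel₀ hκ.ne' this
    linarith

lemma count_humps {p q L m : ℝ} (h : p.HolderConjugate q) (_hm : 0 < m) (n : ℕ) :
    ∀ (a b κ η α : ℝ) (u z : ℝ → ℝ), 0 < a → 0 < b → 0 < κ → 0 < η →
      m ≤ Lam p q a b / κ → m ≤ Lam p q a b / η → L - α ≤ n * m →
      Sys p q a b (κ ^ p) (η ^ p) α L u z → α < L → u α = 0 → 0 < z α → u L = 0 →
      ∃ P N : ℕ, 1 ≤ P + N ∧ (P = N ∨ P = N + 1) ∧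
        P * (Lam p q a b / κ) + N * (Lam p q a b / η) = L - α := by
  induction n with
  | zero =>
    intro a b κ η α u z _ _ _ _ _ _ h1 _ h2
    simp at h1; linarith
  | succ n ih =>
    intro a b κ η α u z ha hb hκ hη m1 m2 hn hs hαL hα hz hL
    obtain ⟨β, hβ, e, huβ, hzβ⟩ := nextzero h ha hb hκ hs hαL hα hz hL
    rcases eq_or_lt_of_le hβ.2 with h1 | h1
    · refine ⟨1, 0, by norm_num, Or.inr rfl, ?_⟩
      rw [← e, h1]; simp
    · push_cast at hn
      obtain ⟨P, N, _, h3, h4⟩ := ih b a η κ β (fun t => -u t) (fun t => -z t) hb ha hη hκ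
        (by rwa [Lam_swap]) (by rwa [Lam_swap]) (by linarith)
        (hs.mono hβ.1.le le_rfl).swap h1 (by simp [huβ]) (by linarith) (by simp [hL])
      rw [Lam_swap] at h4
      refine ⟨N + 1, P, by omega, by omega, ?_⟩
      push_cast
      linarith

/-! ### Construction of solutions -/

lemma prim_Icc {α β : ℝ} {f : ℝ → ℝ} (hf : ContinuousOn f (Set.Icc α β))
    {t : ℝ} (ht : t ∈ Set.Icc α β) :
    HasDerivWithinAt (fun x => ∫ s in α..x, f s) (f t) (Set.Icc α β) t := by
  have : Fact (t ∈ Set.Icc α β) := ⟨ht⟩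
  have hi : IntervalIntegrable f MeasureTheory.volume α t :=
    ContinuousOn.intervalIntegrable_of_Icc ht.1 (hf.mono (Set.Icc_subset_Icc_right ht.2))
  refine intervalIntegral.integral_hasDerivWithinAt_right hi
    (s := Set.Icc α β) (t := Set.Icc α β) ?_ (hf t ht)
  exact hf.stronglyMeasurableAtFilter_nhdsWithin measurableSet_Icc t

lemma deriv_extend {α β : ℝ} {f f' : ℝ → ℝ} (hf : ContinuousOn f (Set.Icc α β))
    (hf' : ContinuousOn f' (Set.Icc α β)) (hd : ∀ t ∈ Set.Ioo α β, HasDerivAt f (f' t) t)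
    {t : ℝ} (ht : t ∈ Set.Icc α β) : HasDerivWithinAt f (f' t) (Set.Icc α β) t := by
  have key : ∀ x ∈ Set.Icc α β, f x = f α + ∫ s in α..x, f' s := by
    intro x hx
    have hsub : Set.Icc α x ⊆ Set.Icc α β := Set.Icc_subset_Icc_right hx.2
    rw [intervalIntegral.integral_eq_sub_of_hasDerivAt_of_le hx.1 (hf.mono hsub)
      (fun s hs => hd s ⟨hs.1, hs.2.trans_le hx.2⟩)
      (ContinuousOn.intervalIntegrable_of_Icc hx.1 (hf'.mono hsub))]
    ring
  exact ((prim_Icc hf' ht).const_add (f α)).congr key (key t ht)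

/-- amplitude -/
noncomputable def Cc (p q a b v : ℝ) : ℝ := (Dn p q a b v) ^ (-(1 / p))

lemma Cc_pos {p q a b : ℝ} (hp : 1 < p) (ha : 0 < a) (hb : 0 < b) (v : ℝ) :
    0 < Cc p q a b v := Real.rpow_pos_of_pos (Dn_pos hp ha hb v) _

lemma Cc_pow {p q a b : ℝ} (hp : 1 < p) (ha : 0 < a) (hb : 0 < b) (v : ℝ) :
    Cc p q a b v ^ p = (Dn p q a b v)⁻¹ := by
  unfold Cc
  rw [← Real.rpow_mul (Dn_pos hp ha hb v).le, ← Real.rpow_neg_one]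
  congr 1
  field_simp

lemma hasDerivAt_Cc {p q a b : ℝ} (h : p.HolderConjugate q) (ha : 0 < a) (hb : 0 < b) (v : ℝ) :
    HasDerivAt (Cc p q a b) (-(ff q a b v * Cc p q a b v / Dn p q a b v)) v := by
  have hD := Dn_pos (q := q) h.lt ha hb v
  have hp := h.lt
  have d1 : HasDerivAt (Dn p q a b) ((p - 1) * (q * ff q a b v)) v :=
    ((hasDerivAt_Ff h.symm.lt ha hb v).const_mul (p - 1)).const_add 1
  refine (d1.rpow_const (p := -(1 / p)) (Or.inl hD.ne')).congr_deriv ?_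
  rw [Real.rpow_sub_one hD.ne', ← mul_assoc (p - 1), hconj_mul' h]
  unfold Cc
  field_simp

lemma tendsto_Dn {p q a b : ℝ} (h : p.HolderConjugate q) (ha : 0 < a) (hb : 0 < b)
    {l : Filter ℝ} (hl : Filter.Tendsto (fun x : ℝ => |x|) l Filter.atTop) :
    Filter.Tendsto (Dn p q a b) l Filter.atTop := by
  have hp := h.lt
  have hM : 0 < max a b := lt_max_of_lt_left ha
  have h1 : Filter.Tendsto (fun v : ℝ => (p - 1) * (|v| ^ q / (max a b) ^ q)) l Filter.atTop :=
    (((tendsto_rpow_atTop h.symm.pos).comp hl).atTop_div_const (by positivity)).const_mul_atTop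
      (by linarith)
  refine Filter.tendsto_atTop_mono (fun v => ?_) h1
  unfold Dn
  have := mul_le_mul_of_nonneg_left (Ff_ge h.symm.lt ha hb v) (by linarith : 0 ≤ p - 1)
  linarith

lemma tendsto_Cc {p q a b : ℝ} (h : p.HolderConjugate q) (ha : 0 < a) (hb : 0 < b)
    {l : Filter ℝ} (hl : Filter.Tendsto (fun x : ℝ => |x|) l Filter.atTop) :
    Filter.Tendsto (Cc p q a b) l (nhds 0) :=
  (tendsto_rpow_neg_atTop (by have := h.lt; positivity)).comp (tendsto_Dn h ha hb hl)

/-- flux at the left end of a normalized hump -/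
noncomputable def zp (p q a : ℝ) : ℝ := a * (1 / (p - 1)) ^ (1 / q)

lemma Cc_mul_eq {p q a b : ℝ} (h : p.HolderConjugate q) (ha : 0 < a) (hb : 0 < b) {v : ℝ}
    (hv : 0 ≤ v) : Cc p q a b v ^ (p - 1) * v =
      a * ((1 - (Dn p q a b v)⁻¹) / (p - 1)) ^ (1 / q) := by
  have hp := h.lt
  have hq := h.symm.lt
  have hC := Cc_pos (q := q) hp ha hb v
  have hD := Dn_pos (q := q) hp ha hb v
  set y := Cc p q a b v ^ (p - 1) * v with hy
  have hy0 : 0 ≤ y := by positivity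
  have e1 : Ff q a b y = (1 - (Dn p q a b v)⁻¹) / (p - 1) := by
    rw [hy, Ff_homog h ha hb hC.le, Cc_pow hp ha hb, eq_div_iff (by linarith)]
    have : (p - 1) * Ff q a b v = Dn p q a b v - 1 := by unfold Dn; ring
    rw [mul_assoc, mul_comm (Ff q a b v), this]
    field_simp
  have e2 : Ff q a b y = (y / a) ^ q := by
    unfold Ff
    rw [max_eq_left hy0, max_eq_right (by linarith : -y ≤ 0), zero_div,
      Real.zero_rpow (by linarith), add_zero]
  rw [← e1, e2, ← Real.rpow_mul (by positivity), mul_one_div_cancel (by linarith), Real.rpow_one]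
  field_simp

lemma tendsto_Z_atTop {p q a b : ℝ} (h : p.HolderConjugate q) (ha : 0 < a) (hb : 0 < b) :
    Filter.Tendsto (fun v => Cc p q a b v ^ (p - 1) * v) Filter.atTop (nhds (zp p q a)) := by
  have hp := h.lt
  have hq := h.symm.pos
  have h1 := (tendsto_Dn h ha hb Filter.tendsto_abs_atTop_atTop).inv_tendsto_atTop
  have h2 := (((h1.const_sub 1).div_const (p - 1)).rpow_const
    (p := 1 / q) (Or.inr (by positivity))).const_mul a
  rw [sub_zero] at h2
  refine h2.congr' ?_
  filter_upwards [Filter.eventually_ge_atTop 0] with v hv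
  exact (Cc_mul_eq h ha hb hv).symm

lemma tendsto_Z_atBot {p q a b : ℝ} (h : p.HolderConjugate q) (ha : 0 < a) (hb : 0 < b) :
    Filter.Tendsto (fun v => Cc p q a b v ^ (p - 1) * v) Filter.atBot (nhds (-zp p q b)) := by
  have h1 := ((tendsto_Z_atTop h hb ha).comp Filter.tendsto_neg_atBot_atTop).neg
  refine h1.congr fun v => ?_
  simp only [Function.comp, Cc, Dn, Ff_swap]
  ring

set_option maxHeartbeats 1000000 in
lemma hump {p q a b κ : ℝ} (h : p.HolderConjugate q) (ha : 0 < a) (hb : 0 < b) (hκ : 0 < κ)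
    (ν α : ℝ) : ∃ u z : ℝ → ℝ, Sys p q a b (κ ^ p) ν α (α + Lam p q a b / κ) u z ∧
      u α = 0 ∧ u (α + Lam p q a b / κ) = 0 ∧ z α = zp p q a ∧
      z (α + Lam p q a b / κ) = -zp p q b ∧
      ∀ t ∈ Set.Ioo α (α + Lam p q a b / κ), 0 < u t := by
  have hp := h.lt
  have hq := h.symm.lt
  have hΛ := Lam_pos h ha hb
  set Λ := Lam p q a b with hΛd
  set β := α + Λ / κ with hβ
  have hαβ : α < β := by have : 0 < Λ / κ := by positivity
                         linarith
  have hκβ : κ * (β - α) = Λ := by rw [hβ]; field_simp; ring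
  set V : ℝ → ℝ := fun t => VV p q a b (Λ - κ * (t - α)) with hV
  have hlin : ∀ t, HasDerivAt (fun t : ℝ => Λ - κ * (t - α)) (-κ) t := by
    intro t
    simpa using (((hasDerivAt_id t).sub_const α).const_mul κ).const_sub Λ
  have hclin : Continuous (fun t : ℝ => Λ - κ * (t - α)) := by fun_prop
  have hin : ∀ t ∈ Set.Ioo α β, 0 < Λ - κ * (t - α) ∧ Λ - κ * (t - α) < Λ := by
    intro t ht
    have h1 : 0 < κ * (t - α) := mul_pos hκ (by linarith [ht.1])
    have h2 : κ * (t - α) < κ * (β - α) := mul_lt_mul_of_pos_left (by linarith [ht.2]) hκ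
    constructor <;> linarith
  have dV : ∀ t ∈ Set.Ioo α β, HasDerivAt V (-(κ * Dn p q a b (V t))) t := by
    intro t ht
    refine ((hasDerivAt_VV h ha hb (hin t ht).1 (hin t ht).2).comp t (hlin t)).congr_deriv ?_
    simp only [hV]; ring
  set u0 : ℝ → ℝ := fun t => κ⁻¹ * Cc p q a b (V t) with hu0
  set z0 : ℝ → ℝ := fun t => Cc p q a b (V t) ^ (p - 1) * V t with hz0
  have dC : ∀ t ∈ Set.Ioo α β, HasDerivAt (fun t => Cc p q a b (V t))
      (κ * (ff q a b (V t) * Cc p q a b (V t))) t := by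
    intro t ht
    have hD := Dn_pos (q := q) hp ha hb (V t)
    refine ((hasDerivAt_Cc h ha hb (V t)).comp t (dV t ht)).congr_deriv ?_
    field_simp
  have du : ∀ t ∈ Set.Ioo α β, HasDerivAt u0 (ff q a b (z0 t)) t := by
    intro t ht
    refine ((dC t ht).const_mul κ⁻¹).congr_deriv ?_
    simp only [hz0]
    rw [ff_homog h ha hb (Cc_pos hp ha hb _).le]
    field_simp
  have hupos : ∀ t, 0 < u0 t := fun t => mul_pos (inv_pos.2 hκ) (Cc_pos hp ha hb _)
  have dz : ∀ t ∈ Set.Ioo α β, HasDerivAt z0 (-(gg p (κ ^ p) ν (u0 t))) t := by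
    intro t ht
    have hC := Cc_pos (q := q) hp ha hb (V t)
    refine (((dC t ht).rpow_const (p := p - 1) (Or.inl hC.ne')).mul (dV t ht)).congr_deriv ?_
    have hg : gg p (κ ^ p) ν (u0 t) = κ * Cc p q a b (V t) ^ (p - 1) := by
      unfold gg
      rw [max_eq_left (hupos t).le, max_eq_right (by linarith [hupos t] : -u0 t ≤ 0),
        Real.zero_rpow (by linarith)]
      simp only [hu0]
      rw [Real.mul_rpow (by positivity) hC.le, Real.inv_rpow hκ.le, Real.rpow_sub_one hκ.ne']
      field_simp; ring
    have hDe : Dn p q a b (V t) = 1 + (p - 1) * (V t * ff q a b (V t)) := by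
      rw [mul_ff hq ha hb]; rfl
    rw [hg, hDe, Real.rpow_sub_one hC.ne' (p - 1)]
    field_simp
    ring
  -- limits
  have lα : Filter.Tendsto V (nhdsWithin α (Set.Ioi α)) Filter.atTop := by
    refine (tendsto_VV_top h ha hb).comp (tendsto_nhdsWithin_iff.2 ⟨?_, ?_⟩)
    · have := hclin.tendsto α
      simp only [sub_self, mul_zero, sub_zero] at this
      exact this.mono_left nhdsWithin_le_nhds
    · filter_upwards [Ioo_mem_nhdsGT hαβ] with t ht using (hin t ht).2
  have lβ : Filter.Tendsto V (nhdsWithin β (Set.Iio β)) Filter.atBot := by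
    refine (tendsto_VV_bot h ha hb).comp (tendsto_nhdsWithin_iff.2 ⟨?_, ?_⟩)
    · have := hclin.tendsto β
      rw [hκβ, sub_self] at this
      exact this.mono_left nhdsWithin_le_nhds
    · filter_upwards [Ioo_mem_nhdsLT hαβ] with t ht using (hin t ht).1
  have uα : Filter.Tendsto u0 (nhdsWithin α (Set.Ioi α)) (nhds 0) := by
    have := ((tendsto_Cc h ha hb Filter.tendsto_abs_atTop_atTop).comp lα).const_mul κ⁻¹
    rwa [mul_zero] at this
  have uβ : Filter.Tendsto u0 (nhdsWithin β (Set.Iio β)) (nhds 0) := by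
    have := ((tendsto_Cc h ha hb Filter.tendsto_abs_atBot_atTop).comp lβ).const_mul κ⁻¹
    rwa [mul_zero] at this
  have zα : Filter.Tendsto z0 (nhdsWithin α (Set.Ioi α)) (nhds (zp p q a)) :=
    (tendsto_Z_atTop h ha hb).comp lα
  have zβ : Filter.Tendsto z0 (nhdsWithin β (Set.Iio β)) (nhds (-zp p q b)) :=
    (tendsto_Z_atBot h ha hb).comp lβ
  have cu0 : ContinuousOn u0 (Set.Ioo α β) := fun t ht => (du t ht).continuousAt.continuousWithinAt
  have cz0 : ContinuousOn z0 (Set.Ioo α β) := fun t ht => (dz t ht).continuousAt.continuousWithinAt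
  set u := extendFrom (Set.Ioo α β) u0 with hu
  set z := extendFrom (Set.Ioo α β) z0 with hz
  have cu : ContinuousOn u (Set.Icc α β) := continuousOn_Icc_extendFrom_Ioo cu0 uα uβ
  have cz : ContinuousOn z (Set.Icc α β) := continuousOn_Icc_extendFrom_Ioo cz0 zα zβ
  have eu : ∀ t ∈ Set.Ioo α β, u t = u0 t := fun t ht =>
    extendFrom_eq (subset_closure ht) (cu0 t ht)
  have ez : ∀ t ∈ Set.Ioo α β, z t = z0 t := fun t ht =>
    extendFrom_eq (subset_closure ht) (cz0 t ht)
  refine ⟨u, z, ⟨fun t ht => ?_, fun t ht => ?_⟩, eq_lim_at_left_extendFrom_Ioo hαβ uα,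
    eq_lim_at_right_extendFrom_Ioo hαβ uβ, eq_lim_at_left_extendFrom_Ioo hαβ zα,
    eq_lim_at_right_extendFrom_Ioo hαβ zβ, fun t ht => by rw [eu t ht]; exact hupos t⟩
  · refine deriv_extend (f' := fun t => ff q a b (z t)) cu
      ((continuous_ff hq ha hb).comp_continuousOn cz) (fun t ht => ?_) ht
    rw [ez t ht]
    refine (du t ht).congr_of_eventuallyEq ?_
    filter_upwards [Ioo_mem_nhds ht.1 ht.2] with s hs using eu s hs
  · refine deriv_extend (f' := fun t => -(gg p (κ ^ p) ν (u t))) cz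
      ((continuous_gg hp _ _).comp_continuousOn cu).neg (fun t ht => ?_) ht
    rw [eu t ht]
    refine (dz t ht).congr_of_eventuallyEq ?_
    filter_upwards [Ioo_mem_nhds ht.1 ht.2] with s hs using ez s hs

lemma hdw_of_notMem_closure {f : ℝ → ℝ} {f' x : ℝ} {s : Set ℝ} (h : x ∉ closure s) :
    HasDerivWithinAt f f' s x :=
  hasDerivWithinAt_iff_hasFDerivWithinAt.2 (HasFDerivWithinAt.of_notMem_closure h)

lemma glue_deriv {α β γ : ℝ} (h1 : α ≤ β) (h2 : β ≤ γ) {f g f' g' : ℝ → ℝ}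
    (hf : ∀ t ∈ Set.Icc α β, HasDerivWithinAt f (f' t) (Set.Icc α β) t)
    (hg : ∀ t ∈ Set.Icc β γ, HasDerivWithinAt g (g' t) (Set.Icc β γ) t)
    (e : f β = g β) (e' : f' β = g' β) {t : ℝ} (ht : t ∈ Set.Icc α γ) :
    HasDerivWithinAt (fun t => if t ≤ β then f t else g t) (if t ≤ β then f' t else g' t)
      (Set.Icc α γ) t := by
  have F : ∀ t ∈ Set.Icc α β, HasDerivWithinAt (fun t => if t ≤ β then f t else g t) (f' t)
      (Set.Icc α β) t := fun t ht =>
    (hf t ht).congr (fun x hx => if_pos hx.2) (if_pos ht.2)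
  have hg' : ∀ x ∈ Set.Icc β γ, (if x ≤ β then f x else g x) = g x := by
    intro x hx
    split_ifs with hh
    · rw [le_antisymm hh hx.1, e]
    · rfl
  have G : ∀ t ∈ Set.Icc β γ, HasDerivWithinAt (fun t => if t ≤ β then f t else g t) (g' t)
      (Set.Icc β γ) t := fun t ht => (hg t ht).congr hg' (hg' t ht)
  rw [← Set.Icc_union_Icc_eq_Icc h1 h2]
  rcases lt_trichotomy t β with hlt | heq | hgt
  · rw [if_pos hlt.le]
    refine (F t ⟨ht.1, hlt.le⟩).union (hdw_of_notMem_closure ?_)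
    rw [isClosed_Icc.closure_eq]
    exact fun hh => absurd hh.1 (not_le.2 hlt)
  · rw [if_pos heq.le]
    subst heq
    exact (F t ⟨h1, le_rfl⟩).union (e' ▸ G t ⟨le_rfl, h2⟩)
  · rw [if_neg (not_le.2 hgt)]
    refine HasDerivWithinAt.union (hdw_of_notMem_closure ?_) (G t ⟨hgt.le, ht.2⟩)
    rw [isClosed_Icc.closure_eq]
    exact fun hh => absurd hh.2 (not_le.2 hgt)

lemma Sys.glue {p q a b μ ν α β γ : ℝ} {u z u₂ z₂ : ℝ → ℝ} (h1 : α ≤ β) (h2 : β ≤ γ)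
    (hs : Sys p q a b μ ν α β u z) (hs₂ : Sys p q a b μ ν β γ u₂ z₂)
    (eu : u β = u₂ β) (ez : z β = z₂ β) :
    Sys p q a b μ ν α γ (fun t => if t ≤ β then u t else u₂ t)
      (fun t => if t ≤ β then z t else z₂ t) := by
  refine ⟨fun t ht => ?_, fun t ht => ?_⟩
  · refine (glue_deriv h1 h2 hs.1 hs₂.1 eu (by rw [ez]) ht).congr_deriv ?_
    simp only; split_ifs <;> rfl
  · refine (glue_deriv h1 h2 hs.2 hs₂.2 ez (by rw [eu]) ht).congr_deriv ?_
    simp only; split_ifs <;> rfl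

lemma build {p q : ℝ} (h : p.HolderConjugate q) (n : ℕ) :
    ∀ (P N : ℕ) (a b κ η α : ℝ), 0 < a → 0 < b → 0 < κ → 0 < η → P + N = n + 1 →
      (P = N ∨ P = N + 1) → ∃ u z : ℝ → ℝ,
      Sys p q a b (κ ^ p) (η ^ p) α (α + (P * (Lam p q a b / κ) + N * (Lam p q a b / η))) u z ∧
      u α = 0 ∧ u (α + (P * (Lam p q a b / κ) + N * (Lam p q a b / η))) = 0 ∧ z α = zp p q a ∧
      ∃ t ∈ Set.Icc α (α + (P * (Lam p q a b / κ) + N * (Lam p q a b / η))), u t ≠ 0 := by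
  induction n with
  | zero =>
    intro P N a b κ η α ha hb hκ hη h1 h2
    obtain ⟨rfl, rfl⟩ : P = 1 ∧ N = 0 := by omega
    obtain ⟨u, z, hs, h1, h2, h3, -, h5⟩ := hump h ha hb hκ (η ^ p) α
    have e : α + (((1:ℕ):ℝ) * (Lam p q a b / κ) + ((0:ℕ):ℝ) * (Lam p q a b / η)) =
      α + Lam p q a b / κ := by simp
    rw [e]
    have : 0 < Lam p q a b / κ := div_pos (Lam_pos h ha hb) hκ
    refine ⟨u, z, hs, h1, h2, h3, α + Lam p q a b / κ / 2, ⟨by linarith, by linarith⟩,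
      (h5 _ ⟨by linarith, by linarith⟩).ne'⟩
  | succ n ih =>
    intro P N a b κ η α ha hb hκ hη h1 h2
    obtain ⟨P, rfl⟩ : ∃ P', P = P' + 1 := ⟨P - 1, by omega⟩
    obtain ⟨u, z, hs, hu1, hu2, hz1, hz2, hpos⟩ := hump h ha hb hκ (η ^ p) α
    have hl : 0 < Lam p q a b / κ := div_pos (Lam_pos h ha hb) hκ
    have hl' : 0 < Lam p q a b / η := div_pos (Lam_pos h ha hb) hη
    obtain ⟨u₂, z₂, hs₂, h21, h22, h23, -⟩ := ih N P b a η κ (α + Lam p q a b / κ) hb ha hη hκ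
      (by omega) (by omega)
    rw [Lam_swap p q a b] at hs₂ h22
    have e : α + Lam p q a b / κ + (N * (Lam p q a b / η) + P * (Lam p q a b / κ)) =
      α + (((P + 1 : ℕ) : ℝ) * (Lam p q a b / κ) + N * (Lam p q a b / η)) := by push_cast; ring
    rw [e] at hs₂ h22
    set γ := α + (((P + 1 : ℕ) : ℝ) * (Lam p q a b / κ) + N * (Lam p q a b / η)) with hγ
    have hle : α + Lam p q a b / κ ≤ γ := by rw [← e]; linarith [show (0:ℝ) ≤
      N * (Lam p q a b / η) + P * (Lam p q a b / κ) by positivity]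
    have hsg := hs.glue (by linarith) hle hs₂.swap (by simp [h21, hu2]) (by simp [h23, hz2])
    refine ⟨_, _, hsg, ?_, ?_, ?_, α + Lam p q a b / κ / 2, ⟨by linarith, by linarith⟩, ?_⟩
    · rw [if_pos (by linarith), hu1]
    · split_ifs with hh
      · rw [le_antisymm hh hle, hu2]
      · simp [h22]
    · rw [if_pos (by linarith), hz1]
    · rw [if_pos (by linarith)]
      exact (hpos _ ⟨by linarith, by linarith⟩).ne'

/-! ### The first eigenvalue and the main theorem -/

lemma lam1_eq {p q a b L : ℝ} (h : p.HolderConjugate q) (ha : 0 < a) (hb : 0 < b) (hL : 0 < L) :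
    lam1 p a b L = (Lam p q a b / L) ^ p := by
  have hp := h.lt
  have hΛ := Lam_pos h ha hb
  set κ := Lam p q a b / L with hκd
  have hκ : 0 < κ := by positivity
  have hlow : ∀ E ∈ { E : ℝ | ∃ u u' : ℝ → ℝ, Adm L u u' ∧
      (∫ t in (0:ℝ)..L, |u t| ^ p) = 1 ∧ E = ∫ t in (0:ℝ)..L, asymE p a b (u' t) },
      κ ^ p ≤ E := by
    rintro E ⟨u, u', hu, hn, rfl⟩
    have hc : Filter.Tendsto (fun x : ℝ => x ^ p) (nhdsWithin κ (Set.Iio κ)) (nhds (κ ^ p)) :=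
      ((Real.continuousAt_rpow_const κ p (Or.inl hκ.ne')).tendsto).mono_left nhdsWithin_le_nhds
    refine le_of_tendsto hc ?_
    filter_upwards [Ioo_mem_nhdsLT hκ] with x hx
    have hxL : x * L < Lam p q a b := (lt_div_iff₀ hL).1 hx.2
    have := energy_lower h ha hb hL hx.1 hxL hu
    rwa [hn, mul_one] at this
  obtain ⟨u, z, hs, hu0, huL, -, -, hpos⟩ := hump h ha hb hκ 1 0
  have e : 0 + Lam p q a b / κ = L := by rw [hκd]; field_simp; ring
  rw [e] at hs huL hpos
  have hw := hs.weak h ha hb hL hu0 huL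
  have hnn : ∀ t ∈ Set.Icc 0 L, 0 ≤ u t := by
    intro t ht
    rcases eq_or_lt_of_le ht.1 with h1 | h1
    · rw [← h1, hu0]
    · rcases eq_or_lt_of_le ht.2 with h2 | h2
      · rw [h2, huL]
      · exact (hpos t ⟨h1, h2⟩).le
  have hE := hw.2 u _ hw.1
  simp only [mul_asymFlux hp] at hE
  have hcabs : ContinuousOn (fun t => |u t| ^ p) (Set.Icc 0 L) :=
    hs.contU.abs.rpow_const fun _ _ => Or.inr (by linarith)
  have hR : ∫ t in (0:ℝ)..L, gg p (κ ^ p) 1 (u t) * u t = κ ^ p * ∫ t in (0:ℝ)..L, |u t| ^ p := by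
    rw [← intervalIntegral.integral_const_mul]
    refine intervalIntegral.integral_congr fun t ht => ?_
    rw [Set.uIcc_of_le hL.le] at ht
    have h0 := hnn t ht
    have h1 := mul_posPow hp (u t)
    simp only [gg]
    rw [max_eq_right (by linarith : -u t ≤ 0), Real.zero_rpow (by linarith), abs_of_nonneg h0]
    rw [max_eq_left h0] at h1 ⊢
    rw [← h1]; ring
  set I := ∫ t in (0:ℝ)..L, |u t| ^ p with hI
  have hIpos : 0 < I := by
    refine intervalIntegral.integral_pos hL hcabs (fun t _ => by positivity) ⟨L / 2, ?_, ?_⟩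
    · constructor <;> linarith
    · have := hpos (L / 2) ⟨by linarith, by linarith⟩
      positivity
  rw [hR] at hE
  set c := I ^ (-(1 / p)) with hc
  have hc0 : 0 < c := by positivity
  have hcp : c ^ p = I⁻¹ := by
    rw [hc, ← Real.rpow_mul hIpos.le, ← Real.rpow_neg_one]
    congr 1
    field_simp
  have hmem : κ ^ p ∈ { E : ℝ | ∃ u u' : ℝ → ℝ, Adm L u u' ∧
      (∫ t in (0:ℝ)..L, |u t| ^ p) = 1 ∧ E = ∫ t in (0:ℝ)..L, asymE p a b (u' t) } := by
    obtain ⟨⟨⟨hd, hdc⟩, -, -⟩, -⟩ := hw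
    refine ⟨fun t => c * u t, fun t => c * ff q a b (z t),
      ⟨⟨fun t ht => (hd t ht).const_mul c, continuousOn_const.mul hdc⟩, by simp [hu0],
        by simp [huL]⟩, ?_, ?_⟩
    · have : ∀ t, |c * u t| ^ p = c ^ p * |u t| ^ p := by
        intro t
        rw [abs_mul, abs_of_pos hc0, Real.mul_rpow hc0.le (abs_nonneg _)]
      simp only [this]
      rw [intervalIntegral.integral_const_mul, hcp, ← hI]
      field_simp
    · have : ∀ s, asymE p a b (c * s) = c ^ p * asymE p a b s := by
        intro s
        unfold asymE
        rw [max_mul_nn hc0.le, max_neg_mul_nn hc0.le, Real.mul_rpow hc0.le (le_max_right _ _),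
          Real.mul_rpow hc0.le (le_max_right _ _)]
        ring
      simp only [this]
      rw [intervalIntegral.integral_const_mul, hE, hcp]
      field_simp
  unfold lam1
  exact le_antisymm (csInf_le ⟨_, fun E hE => hlow E hE⟩ hmem) (le_csInf ⟨_, hmem⟩ hlow)

lemma rpow_conv {p μ : ℝ} (hp : 1 < p) (hμ : 0 < μ) :
    (μ ^ (1 / p)) ^ p = μ ∧ μ ^ (-(1 / p)) = (μ ^ (1 / p))⁻¹ := by
  refine ⟨?_, Real.rpow_neg hμ.le _⟩
  rw [← Real.rpow_mul hμ.le, one_div_mul_cancel (by linarith), Real.rpow_one]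

theorem stmt15 (p a b L μ ν : ℝ) (hp : 1 < p) (ha : 0 < a) (hb : 0 < b) (hL : 0 < L)
    (hμ : 0 < μ) (hν : 0 < ν) :
    (∃ u u' : ℝ → ℝ, IsWeakSol p a b L u u'
        (fun t => μ * (max (u t) 0) ^ (p - 1) - ν * (max (-u t) 0) ^ (p - 1)) ∧
        ∃ t ∈ Set.Icc (0:ℝ) L, u t ≠ 0) ↔
      ∃ P N : ℕ, 1 ≤ P + N ∧ |(P : ℝ) - (N : ℝ)| ≤ 1 ∧
        (P : ℝ) * μ ^ (-(1 / p)) + (N : ℝ) * ν ^ (-(1 / p)) =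
          (lam1 p a b L) ^ (-(1 / p)) := by
  obtain ⟨q, h⟩ : ∃ q, p.HolderConjugate q := ⟨_, Real.HolderConjugate.conjExponent hp⟩
  have hq := h.symm.lt
  obtain ⟨m1, m2⟩ := rpow_conv hp hμ
  obtain ⟨n1, n2⟩ := rpow_conv hp hν
  have hκ : 0 < μ ^ (1 / p) := by positivity
  have hη : 0 < ν ^ (1 / p) := by positivity
  set κ := μ ^ (1 / p) with hκd
  set η := ν ^ (1 / p) with hηd
  have hΛ := Lam_pos h ha hb
  have hlam : (lam1 p a b L) ^ (-(1 / p)) = L / Lam p q a b := by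
    rw [lam1_eq h ha hb hL, ← Real.rpow_mul (by positivity),
      show p * -(1 / p) = -1 by field_simp, Real.rpow_neg_one, inv_div]
  rw [m2, n2, hlam]
  set Λ := Lam p q a b with hΛd
  have hiff : ∀ P N : ℕ, (P : ℝ) * κ⁻¹ + N * η⁻¹ = L / Λ ↔ P * (Λ / κ) + N * (Λ / η) = L := by
    intro P N
    rw [eq_div_iff hΛ.ne']
    have : ((P : ℝ) * κ⁻¹ + N * η⁻¹) * Λ = P * (Λ / κ) + N * (Λ / η) := by
      rw [div_eq_mul_inv, div_eq_mul_inv]; ring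
    rw [this]
  have habs : ∀ P N : ℕ, |(P : ℝ) - (N : ℝ)| ≤ 1 ↔ P ≤ N + 1 ∧ N ≤ P + 1 := by
    intro P N
    rw [abs_le]
    constructor
    · rintro ⟨h1, h2⟩
      constructor
      · have : (P : ℝ) ≤ N + 1 := by linarith
        exact_mod_cast this
      · have : (N : ℝ) ≤ P + 1 := by linarith
        exact_mod_cast this
    · rintro ⟨h1, h2⟩
      have h1' : (P : ℝ) ≤ N + 1 := by exact_mod_cast h1
      have h2' : (N : ℝ) ≤ P + 1 := by exact_mod_cast h2
      constructor <;> linarith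
  simp only [hiff, habs]
  constructor
  · rintro ⟨u, u', hw, t, ht, hut⟩
    have hu0 := hw.1.2.1
    have huL := hw.1.2.2
    have hs := weak_sys (q := q) h ha hb hL (μ := μ) (ν := ν) hw
    rw [← m1, ← n1] at hs
    set z : ℝ → ℝ := fun t => asymFlux p a b (u' t) with hz
    have hz0 : z 0 ≠ 0 := by
      intro h0
      have he := hs.energy h ha hb ht
      rw [h0, hu0, ← mul_ff hq ha hb 0] at he
      rw [neg_zero, max_self, Real.zero_rpow (by linarith)] at he
      have h1 := mul_nonneg (by linarith : 0 ≤ p - 1) (Ff_nonneg (q := q) ha hb (z t))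
      have hA : 0 ≤ κ ^ p * max (u t) 0 ^ p := by positivity
      have hB : 0 ≤ η ^ p * max (-u t) 0 ^ p := by positivity
      rcases lt_or_gt_of_ne hut with h2 | h2
      · have : 0 < η ^ p * max (-u t) 0 ^ p := by
          have : 0 < max (-u t) 0 := lt_max_of_lt_left (by linarith)
          positivity
        linarith
      · have : 0 < κ ^ p * max (u t) 0 ^ p := by
          have : 0 < max (u t) 0 := lt_max_of_lt_left h2
          positivity
        linarith
    have hm : 0 < min (Λ / κ) (Λ / η) := lt_min (by positivity) (by positivity)
    obtain ⟨n, hn⟩ := exists_nat_ge (L / min (Λ / κ) (Λ / η))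
    have hn' : L - 0 ≤ n * min (Λ / κ) (Λ / η) := by
      rw [div_le_iff₀ hm] at hn; linarith
    rcases lt_or_gt_of_ne hz0 with hneg | hpos
    · obtain ⟨P, N, h1, h2, h3⟩ := count_humps h hm n b a η κ 0 (fun t => -u t) (fun t => -z t)
        hb ha hη hκ (by rw [Lam_swap p q a b]; exact min_le_right _ _)
        (by rw [Lam_swap p q a b]; exact min_le_left _ _) hn' hs.swap hL (by simp [hu0])
        (by linarith) (by simp [huL])
      rw [Lam_swap p q a b] at h3
      refine ⟨N, P, by omega, by omega, by linarith⟩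
    · obtain ⟨P, N, h1, h2, h3⟩ := count_humps h hm n a b κ η 0 u z
        ha hb hκ hη (min_le_left _ _) (min_le_right _ _) hn' hs hL hu0 hpos huL
      refine ⟨P, N, by omega, by omega, by linarith⟩
  · rintro ⟨P, N, h1, ⟨h2, h3⟩, h4⟩
    obtain ⟨u, z, hs, hu0, huL, hne⟩ : ∃ u z : ℝ → ℝ, Sys p q a b μ ν 0 L u z ∧ u 0 = 0 ∧
        u L = 0 ∧ ∃ t ∈ Set.Icc 0 L, u t ≠ 0 := by
      by_cases hPN : N ≤ P
      · obtain ⟨u, z, hs, hu0, huL, -, hne⟩ := build h (P + N - 1) P N a b κ η 0 ha hb hκ hη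
          (by omega) (by omega)
        rw [← hΛd, h4, zero_add] at hs huL hne
        rw [m1, n1] at hs
        exact ⟨u, z, hs, hu0, huL, hne⟩
      · obtain ⟨u, z, hs, hu0, huL, -, t, ht, hne⟩ := build h (P + N - 1) N P b a η κ 0 hb ha hη hκ
          (by omega) (by omega)
        rw [Lam_swap p q a b, ← hΛd, add_comm ((N : ℝ) * _), h4, zero_add] at hs huL ht
        rw [m1, n1] at hs
        exact ⟨_, _, hs.swap, by simp [hu0], by simp [huL], t, ht, by simpa using hne⟩
    exact ⟨u, _, hs.weak h ha hb hL hu0 huL, hne⟩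
end
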